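/- arXiv:0907.0887 — 3 statements merged into one kernel-verified Lean document; each statement's English description precedes it below -/
import Mathlib

section
/- There exist constants c > 0, C₀ ≥ 1 and ρ₀ ≥ 1, depending only on d, Γ, κ and the exponents α_j, such that for all ρ ≥ ρ₀, every n ∈ {0, 1, …, d}, every V ∈ 𝒱(r,n), and every R ≥ C₀ρ, the Lebesgue measure of Ξ(V) ∩ B(0,R) satisfies vol(Ξ(V) ∩ B(0,R)) ≥ c ρ^{nα_n} R^{d−n}, where B(0,R) is the open ball of radius R centered at the origin. -/
noncomputable section

open Set Submodule Module MeasureTheory Relation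
open scoped RealInnerProductSpace

variable {d : ℕ}

/-- The lattice Γ generated over ℤ by the basis `B` of ℝ^d. -/
def latticeOf (B : Basis (Fin d) ℝ (EuclideanSpace ℝ (Fin d))) :
    Submodule ℤ (EuclideanSpace ℝ (Fin d)) :=
  Submodule.span ℤ (Set.range B)

/-- The determinant d(Γ) of the lattice generated by `B`. -/
def latDet (B : Basis (Fin d) ℝ (EuclideanSpace ℝ (Fin d))) : ℝ :=
  |(EuclideanSpace.basisFun (Fin d) ℝ).toBasis.det (fun i => B i)|

/-- The dual lattice Γ† = {θ : θ·g ∈ 2πℤ for all g ∈ Γ}. -/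
def dualLattice (B : Basis (Fin d) ℝ (EuclideanSpace ℝ (Fin d))) :
    Set (EuclideanSpace ℝ (Fin d)) :=
  {θ | ∀ g ∈ latticeOf B, ∃ k : ℤ, ⟪θ, g⟫ = 2 * Real.pi * k}

/-- Θ_r : nonzero dual lattice vectors of norm at most r. -/
def Theta (B : Basis (Fin d) ℝ (EuclideanSpace ℝ (Fin d))) (r : ℝ) :
    Set (EuclideanSpace ℝ (Fin d)) :=
  {θ | θ ∈ dualLattice B ∧ θ ≠ 0 ∧ ‖θ‖ ≤ r}

/-- Θ_r⁰ : dual lattice vectors of norm at most r (including 0). -/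
def Theta0 (B : Basis (Fin d) ℝ (EuclideanSpace ℝ (Fin d))) (r : ℝ) :
    Set (EuclideanSpace ℝ (Fin d)) :=
  {θ | θ ∈ dualLattice B ∧ ‖θ‖ ≤ r}

/-- A lattice r-subspace: a subspace spanned by dual lattice vectors from Θ_r⁰. -/
def IsLatticeSubspace (B : Basis (Fin d) ℝ (EuclideanSpace ℝ (Fin d))) (r : ℝ)
    (V : Submodule ℝ (EuclideanSpace ℝ (Fin d))) : Prop :=
  ∃ S : Set (EuclideanSpace ℝ (Fin d)), S ⊆ Theta0 B r ∧ V = Submodule.span ℝ S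

/-- Orthogonal projection ξ_V onto a subspace, viewed in the ambient space. -/
def projV (V : Submodule ℝ (EuclideanSpace ℝ (Fin d))) (ξ : EuclideanSpace ℝ (Fin d)) :
    EuclideanSpace ℝ (Fin d) :=
  (orthogonalProjection V ξ : EuclideanSpace ℝ (Fin d))

/-- ω_n: the volume of the unit ball in ℝ^n. -/
def unitBallVol (n : ℕ) : ℝ :=
  (MeasureTheory.volume (Metric.ball (0 : EuclideanSpace ℝ (Fin n)) 1)).toReal

/-- The resonant layer Λ(θ) (= ℝ^d when θ = 0). -/
def layer (ρ a : ℝ) (θ : EuclideanSpace ℝ (Fin d)) : Set (EuclideanSpace ℝ (Fin d)) :=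
  {ξ | θ = 0 ∨ |⟪ξ, θ⟫| < ρ ^ a * ‖θ‖}

/-- Υ_θ(ξ): the points θ-resonant congruent to ξ. -/
def upsTheta (ρ a : ℝ) (θ ξ : EuclideanSpace ℝ (Fin d)) : Set (EuclideanSpace ℝ (Fin d)) :=
  {η | ξ ∈ layer ρ a θ ∧ η ∈ layer ρ a θ ∧ ∃ l : ℤ, ξ - η = (l : ℝ) • θ}

/-- One step of resonant congruence (with some θ ∈ Θ_r⁰). -/
def resStep (B : Basis (Fin d) ℝ (EuclideanSpace ℝ (Fin d))) (ρ a r : ℝ)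
    (ξ η : EuclideanSpace ℝ (Fin d)) : Prop :=
  ∃ θ ∈ Theta0 B r, η ∈ upsTheta ρ a θ ξ

/-- Υ(ξ): all points resonant congruent to ξ. -/
def Ups (B : Basis (Fin d) ℝ (EuclideanSpace ℝ (Fin d))) (ρ a r : ℝ)
    (ξ : EuclideanSpace ℝ (Fin d)) : Set (EuclideanSpace ℝ (Fin d)) :=
  {η | Relation.ReflTransGen (resStep B ρ a r) ξ η}

/-- N(ξ) = Υ(ξ) − ξ. -/
def resN (B : Basis (Fin d) ℝ (EuclideanSpace ℝ (Fin d))) (ρ a r : ℝ)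
    (ξ : EuclideanSpace ℝ (Fin d)) : Set (EuclideanSpace ℝ (Fin d)) :=
  {m | ξ + m ∈ Ups B ρ a r ξ}

/-- Ξ₁(V) = {ξ : |ξ_V| < ρ^{α_n}}, n = dim V. -/
def Xi1 (ρ : ℝ) (α : ℕ → ℝ) (V : Submodule ℝ (EuclideanSpace ℝ (Fin d))) :
    Set (EuclideanSpace ℝ (Fin d)) :=
  {ξ | ‖projV V ξ‖ < ρ ^ α (Module.finrank ℝ V)}

/-- Ξ₂(V) = ∪_{ξ ∈ Ξ₁(V)} Υ(ξ). -/
def Xi2 (B : Basis (Fin d) ℝ (EuclideanSpace ℝ (Fin d))) (ρ r : ℝ) (α : ℕ → ℝ)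
    (V : Submodule ℝ (EuclideanSpace ℝ (Fin d))) : Set (EuclideanSpace ℝ (Fin d)) :=
  {η | ∃ ξ ∈ Xi1 ρ α V, η ∈ Ups B ρ (α 1) r ξ}

/-- Ξ(V): Ξ₂(V) minus the Ξ₂(W) for all lattice r-subspaces W of larger dimension. -/
def Xi (B : Basis (Fin d) ℝ (EuclideanSpace ℝ (Fin d))) (ρ r : ℝ) (α : ℕ → ℝ)
    (V : Submodule ℝ (EuclideanSpace ℝ (Fin d))) : Set (EuclideanSpace ℝ (Fin d)) :=
  Xi2 B ρ r α V \
    ⋃ W ∈ {W : Submodule ℝ (EuclideanSpace ℝ (Fin d)) |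
        IsLatticeSubspace B r W ∧ Module.finrank ℝ V < Module.finrank ℝ W},
      Xi2 B ρ r α W

/-- The standing conditions on the parameters ρ ≥ 1, r, κ > 0 and the exponents α_j:
0 = α₀, α_{n+1} > α_n + 2κd², α_d < 1, r ≤ ρ^κ, and r ≥ r₀ (i.e. Θ_r⁰ spans ℝ^d). -/
def GoodParams (B : Basis (Fin d) ℝ (EuclideanSpace ℝ (Fin d))) (ρ r κ : ℝ)
    (α : ℕ → ℝ) : Prop :=
  1 ≤ ρ ∧ 0 < κ ∧ α 0 = 0 ∧ (∀ n < d, α n + 2 * κ * (d : ℝ) ^ 2 < α (n + 1)) ∧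
    α d < 1 ∧ r ≤ ρ ^ κ ∧ Submodule.span ℝ (Theta0 B r) = ⊤

/-!
Every vector of `Θ_r⁰` keeps its distance from each lattice `r`-subspace not containing it, because
determinants of vectors in the dual lattice are bounded away from `0`. Hence a chain of resonant
congruences, however long, moves a point by at most `ρ ^ α₁` times a fixed power of `ρ ^ κ`. So a
point of `Ξ₂(W)` with `W ≠ ℝ^d` is nearly orthogonal to `W`, and `Ξ₂(ℝ^d)` lies in a ball of radius
`O(ρ)`. If `dim W > dim V`, then some `θ ∈ Θ_r⁰` lies in `W` but not in `V`, and the slab around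
`θᗮ` containing `Ξ₂(W)` occupies a small fraction of a box with sides of order `ρ ^ α_n` along `V`
and `R` along `Vᗮ`. There are only polynomially many such `θ`, and the gaps between the exponents
absorb all powers of `ρ ^ κ`, so at least half of the box survives in `Ξ(V)`.
-/

/-- A set of vectors is `Q`-transverse if no member makes a small angle with the span of a subset
not containing it: its distance to such a span is at least `Q⁻¹` times its norm. -/
def UniformlyTransverse {E : Type*} [NormedAddCommGroup E] [NormedSpace ℝ E]
    (Θ : Set E) (Q : ℝ) : Prop :=
  ∀ S ⊆ Θ, ∀ θ ∈ Θ, θ ∉ span ℝ S → ∀ u ∈ span ℝ S, ‖θ‖ ≤ Q * ‖θ - u‖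

section Lattice

variable {ι E : Type*}

lemma one_le_abs_det_of_mem_span_int [Fintype ι] [DecidableEq ι] [AddCommGroup E] [Module ℝ E]
    (b : Basis ι ℝ E) {v : ι → E} (hv : LinearIndependent ℝ v)
    (hmem : ∀ i, v i ∈ span ℤ (range b)) : 1 ≤ |b.det v| := by
  have hcoord : ∀ i j, ∃ k : ℤ, (k : ℝ) = b.repr (v j) i := fun i j =>
    (b.mem_span_iff_repr_mem ℤ (v j)).1 (hmem j) i
  choose k hk using hcoord
  have hdet : b.det v = ((Matrix.of k).det : ℤ) := by
    rw [b.det_apply, ← eq_intCast (Int.castRingHom ℝ), RingHom.map_det]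
    congr 1
    ext i j
    exact (hk i j).symm
  have := b.finiteDimensional_of_finite
  have hunit : IsUnit (b.det v) :=
    (Basis.is_basis_iff_det b).1
      ⟨hv, hv.span_eq_top_of_card_eq_finrank' (finrank_eq_card_basis b).symm⟩
  have hne : (Matrix.of k).det ≠ 0 := by
    rintro h0
    rw [hdet, h0, Int.cast_zero] at hunit
    exact not_isUnit_zero hunit
  rw [hdet]
  exact_mod_cast Int.one_le_abs hne

lemma alternatingMap_map_update_sub_of_mem_span [DecidableEq ι] [AddCommGroup E] [Module ℝ E]
    (f : E [⋀^ι]→ₗ[ℝ] ℝ) (v : ι → E) {i : ι} {u : E} (hu : u ∈ span ℝ (v '' {i}ᶜ)) :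
    f (Function.update v i (v i - u)) = f v := by
  have hdep : ¬ LinearIndependent ℝ (Function.update v i u) := fun h => by
    have himage : Function.update v i u '' {i}ᶜ = v '' {i}ᶜ :=
      image_congr fun j hj => Function.update_of_ne hj u v
    refine h.notMem_span_image (s := {i}ᶜ) (x := i) (by simp) ?_
    rwa [himage, Function.update_self]
  rw [f.map_update_sub, f.map_linearDependent _ hdep, sub_zero, Function.update_eq_self]

lemma exists_linearIndependent_family_of_notMem_span [AddCommGroup E] [Module ℝ E]
    (b : Basis ι ℝ E) {Θ S : Set E} (hΘ : span ℝ Θ = ⊤) (hS : S ⊆ Θ) {θ : E} (hθ : θ ∈ Θ)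
    (hθS : θ ∉ span ℝ S) :
    ∃ (v : ι → E) (i : ι), LinearIndependent ℝ v ∧ (∀ j, v j ∈ Θ) ∧ v i = θ ∧
      span ℝ S ≤ span ℝ (v '' {i}ᶜ) := by
  obtain ⟨S', hS'S, hspan, hS'⟩ := exists_linearIndependent ℝ S
  have hins : LinearIndepOn ℝ id (insert θ S') := LinearIndepOn.id_insert hS' (by rwa [hspan])
  have hsub : insert θ S' ⊆ Θ := insert_subset hθ (hS'S.trans hS)
  have hbase := hins.subset_extend hsub
  have htop : ⊤ ≤ span ℝ (range ((↑) : hins.extend hsub → E)) := by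
    rw [Subtype.range_coe, hins.span_extend_eq_span hsub, hΘ]
  let e : ι ≃ hins.extend hsub :=
    b.indexEquiv (Basis.mk (hins.linearIndepOn_extend hsub) htop)
  refine ⟨fun j => e j, e.symm ⟨θ, hbase (mem_insert _ _)⟩,
    (hins.linearIndepOn_extend hsub).comp e e.injective,
    fun j => hins.extend_subset hsub (e j).2, by simp, ?_⟩
  rw [← hspan]
  refine span_mono fun s hs => ⟨e.symm ⟨s, hbase (mem_insert_of_mem _ hs)⟩, ?_, by simp⟩
  rw [mem_compl_singleton_iff, e.symm.injective.ne_iff, Ne, Subtype.mk.injEq]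
  rintro rfl
  exact hθS (hspan ▸ subset_span hs)

variable [Fintype ι] [NormedAddCommGroup E] [NormedSpace ℝ E]

lemma continuous_basis_det [DecidableEq ι] (b : Basis ι ℝ E) : Continuous b.det := by
  have := b.finiteDimensional_of_finite
  change Continuous fun v => (b.toMatrix v).det
  refine Continuous.matrix_det (continuous_matrix fun i j => ?_)
  exact (b.coord i).continuous_of_finiteDimensional.comp (continuous_apply j)

-- Replacing `θ` by `θ - u` preserves the determinant of a basis extracted from `Θ`.
lemma exists_uniformlyTransverse_of_subset_span_int (b : Basis ι ℝ E) :
    ∃ K : ℝ, 1 ≤ K ∧ ∀ T : ℝ, ∀ Θ ⊆ (span ℤ (range b) : Set E),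
      (∀ θ ∈ Θ, ‖θ‖ ≤ T) → span ℝ Θ = ⊤ → UniformlyTransverse Θ (K * T ^ Fintype.card ι) := by
  classical
  obtain ⟨C, -, hC⟩ := b.det.exists_bound_of_continuous (continuous_basis_det b)
  refine ⟨max C 1, le_max_right _ _, fun T Θ hΘ hΘT hspan S hS θ hθ hθS u hu => ?_⟩
  have hT : 0 ≤ T := (norm_nonneg θ).trans (hΘT θ hθ)
  obtain ⟨v, i, hv, hvΘ, rfl, hSv⟩ :=
    exists_linearIndependent_family_of_notMem_span b hspan hS hθ hθS
  have hprod : ∏ j, ‖Function.update v i (v i - u) j‖ ≤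
      T ^ (Fintype.card ι - 1) * ‖v i - u‖ := by
    rw [← Finset.prod_erase_mul _ _ (Finset.mem_univ i), Function.update_self]
    gcongr
    refine (Finset.prod_le_prod (g := fun _ => T) (fun _ _ => norm_nonneg _)
      fun j hj => ?_).trans_eq (by simp)
    rw [Function.update_of_ne (Finset.ne_of_mem_erase hj)]
    exact hΘT _ (hvΘ j)
  have hone : 1 ≤ max C 1 * (T ^ (Fintype.card ι - 1) * ‖v i - u‖) := calc
    1 ≤ |b.det v| := one_le_abs_det_of_mem_span_int b hv fun j => hΘ (hvΘ j)
    _ = ‖b.det (Function.update v i (v i - u))‖ := by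
      rw [alternatingMap_map_update_sub_of_mem_span _ _ (hSv hu), Real.norm_eq_abs]
    _ ≤ C * ∏ j, ‖Function.update v i (v i - u) j‖ := hC _
    _ ≤ max C 1 * (T ^ (Fintype.card ι - 1) * ‖v i - u‖) := by
      gcongr
      exact le_max_left _ _
  calc ‖v i‖ ≤ T * 1 := by simpa using hΘT _ hθ
    _ ≤ T * (max C 1 * (T ^ (Fintype.card ι - 1) * ‖v i - u‖)) := by gcongr
    _ = max C 1 * (T * T ^ (Fintype.card ι - 1)) * ‖v i - u‖ := by ring
    _ = max C 1 * T ^ Fintype.card ι * ‖v i - u‖ := by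
      have : Nonempty ι := ⟨i⟩
      rw [mul_pow_sub_one Fintype.card_ne_zero]

lemma exists_ncard_le_of_subset_span_int (b : Basis ι ℝ E) :
    ∃ K : ℝ, 1 ≤ K ∧ ∀ T : ℝ, 1 ≤ T → ∀ Θ ⊆ (span ℤ (range b) : Set E),
      (∀ θ ∈ Θ, ‖θ‖ ≤ T) → Θ.Finite ∧ (Θ.ncard : ℝ) ≤ K * T ^ Fintype.card ι := by
  classical
  have := b.finiteDimensional_of_finite
  set M : ℝ := ‖(b.equivFunL : E →L[ℝ] ι → ℝ)‖
  have hM : 0 ≤ M := norm_nonneg _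
  refine ⟨(2 * M + 1) ^ Fintype.card ι, one_le_pow₀ (by linarith), fun T hT Θ hΘ hΘT => ?_⟩
  set N : ℕ := ⌊M * T⌋₊
  have hfloor : ∀ θ ∈ Θ, ∀ i, (⌊b.repr θ i⌋ : ℝ) = b.repr θ i := fun θ hθ i => by
    obtain ⟨k, hk⟩ := (b.mem_span_iff_repr_mem ℤ θ).1 (hΘ hθ) i
    rw [← hk, algebraMap_int_eq, eq_intCast, Int.floor_intCast]
  let coords : E → ι → ℤ := fun θ i => ⌊b.repr θ i⌋
  let box : Finset (ι → ℤ) := Finset.Icc (fun _ => -(N : ℤ)) fun _ => N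
  have hmaps : ∀ θ ∈ Θ, coords θ ∈ (box : Set (ι → ℤ)) := fun θ hθ => by
    have habs : ∀ i, |coords θ i| ≤ N := fun i => by
      have hle : |b.repr θ i| ≤ M * T := calc
        |b.repr θ i| ≤ ‖(b.equivFunL : E →L[ℝ] ι → ℝ) θ‖ := norm_le_pi_norm (b.equivFun θ) i
        _ ≤ M * T := (b.equivFunL : E →L[ℝ] ι → ℝ).le_opNorm_of_le (hΘT θ hθ)
      rw [← hfloor θ hθ, ← Int.cast_abs, ← Nat.cast_natAbs] at hle
      rw [Int.abs_eq_natAbs]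
      exact_mod_cast Nat.le_floor hle
    rw [Finset.mem_coe, Finset.mem_Icc]
    exact ⟨fun i => (abs_le.1 (habs i)).1, fun i => (abs_le.1 (habs i)).2⟩
  have hinj : InjOn coords Θ := fun θ hθ η hη h => b.ext_elem fun i => by
    rw [← hfloor θ hθ, ← hfloor η hη]
    exact congrArg _ (congrFun h i)
  refine ⟨Finite.of_injOn hmaps hinj box.finite_toSet, ?_⟩
  calc (Θ.ncard : ℝ) ≤ box.card := by
        exact_mod_cast (ncard_le_ncard_of_injOn coords hmaps hinj).trans_eq (ncard_coe_finset box)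
    _ = (2 * N + 1) ^ Fintype.card ι := by
      have hN : ((N : ℤ) + 1 - -N).toNat = 2 * N + 1 := by omega
      rw [Pi.card_Icc, Finset.prod_congr rfl fun _ _ => Int.card_Icc _ _, hN, Finset.prod_const]
      push_cast; rfl
    _ ≤ (2 * (M * T) + T) ^ Fintype.card ι := by
      gcongr
      exact Nat.floor_le (by positivity)
    _ = (2 * M + 1) ^ Fintype.card ι * T ^ Fintype.card ι := by rw [← mul_pow]; ring

end Lattice

section Projection

variable {E : Type*} [NormedAddCommGroup E] [InnerProductSpace ℝ E]
  {U : Submodule ℝ E} [U.HasOrthogonalProjection]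

lemma abs_inner_le_of_norm_starProjection_le {x u : E} {f : ℝ} (hx : ‖U.starProjection x‖ ≤ f)
    (hu : u ∈ U) : |⟪x, u⟫| ≤ f * ‖u‖ := calc
  |⟪x, u⟫| = |⟪U.starProjection x, u⟫| := by
    rw [inner_starProjection_left_eq_right, starProjection_eq_self_iff.2 hu]
  _ ≤ ‖U.starProjection x‖ * ‖u‖ := abs_real_inner_le_norm _ _
  _ ≤ f * ‖u‖ := by gcongr

lemma norm_starProjection_le_of_abs_inner_le {x : E} {f : ℝ} (hf : 0 ≤ f)
    (hx : ∀ u ∈ U, |⟪x, u⟫| ≤ f * ‖u‖) : ‖U.starProjection x‖ ≤ f := by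
  have hmem := starProjection_apply_mem U x
  have hself : ‖U.starProjection x‖ * ‖U.starProjection x‖ ≤ f * ‖U.starProjection x‖ := by
    rw [← real_inner_self_eq_norm_mul_norm, inner_starProjection_left_eq_right,
      starProjection_eq_self_iff.2 hmem]
    exact (le_abs_self _).trans (hx _ hmem)
  rcases (norm_nonneg (U.starProjection x)).eq_or_lt with h0 | hpos
  · rwa [← h0]
  · exact le_of_mul_le_mul_right hself hpos

lemma norm_sub_le_norm_starProjection_add {x y : E} (hxy : x - y ∈ U) :
    ‖x - y‖ ≤ ‖U.starProjection x‖ + ‖U.starProjection y‖ := by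
  rw [← starProjection_eq_self_iff.2 hxy, map_sub]
  exact norm_sub_le _ _

lemma norm_starProjection_sup_span_singleton_le {x θ : E} {g h Q : ℝ}
    [(U ⊔ span ℝ {θ}).HasOrthogonalProjection] (hQ : 0 ≤ Q) (hh : 0 ≤ h)
    (hθ : ∀ u ∈ U, ‖θ‖ ≤ Q * ‖θ - u‖) (hx : ‖U.starProjection x‖ ≤ g)
    (hxθ : |⟪x, θ⟫| ≤ h * ‖θ‖) :
    ‖(U ⊔ span ℝ {θ}).starProjection x‖ ≤ g + (h + g) * Q := by
  have hg : 0 ≤ g := (norm_nonneg _).trans hx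
  have hperp : |⟪x, Uᗮ.starProjection θ⟫| ≤ (h + g) * Q * ‖Uᗮ.starProjection θ‖ := calc
    |⟪x, Uᗮ.starProjection θ⟫| = |⟪x, θ⟫ - ⟪x, U.starProjection θ⟫| := by
      rw [starProjection_orthogonal_val, inner_sub_right]
    _ ≤ |⟪x, θ⟫| + |⟪x, U.starProjection θ⟫| := abs_sub _ _
    _ ≤ h * ‖θ‖ + g * ‖U.starProjection θ‖ :=
      add_le_add hxθ (abs_inner_le_of_norm_starProjection_le hx (starProjection_apply_mem U θ))
    _ ≤ h * ‖θ‖ + g * ‖θ‖ := by gcongr; exact U.norm_starProjection_apply_le θ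
    _ = (h + g) * ‖θ‖ := by ring
    _ ≤ (h + g) * (Q * ‖Uᗮ.starProjection θ‖) := by
      gcongr
      rw [starProjection_orthogonal_val]
      exact hθ _ (starProjection_apply_mem U θ)
    _ = (h + g) * Q * ‖Uᗮ.starProjection θ‖ := by ring
  refine norm_starProjection_le_of_abs_inner_le (by positivity) fun w hw => ?_
  obtain ⟨u, hu, _, hv, rfl⟩ := mem_sup.1 hw
  obtain ⟨t, rfl⟩ := mem_span_singleton.1 hv
  set w := u + t • θ
  have hw' : Uᗮ.starProjection w = t • Uᗮ.starProjection θ := by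
    rw [map_add, map_smul, starProjection_orthogonal_apply_eq_zero hu, zero_add]
  calc |⟪x, w⟫| = |⟪x, U.starProjection w⟫ + t * ⟪x, Uᗮ.starProjection θ⟫| := by
        rw [← inner_smul_right, ← hw', ← inner_add_right,
          starProjection_add_starProjection_orthogonal]
    _ ≤ |⟪x, U.starProjection w⟫| + |t| * |⟪x, Uᗮ.starProjection θ⟫| := by
        rw [← abs_mul]; exact abs_add_le _ _
    _ ≤ g * ‖U.starProjection w‖ + |t| * ((h + g) * Q * ‖Uᗮ.starProjection θ‖) := by
        gcongr
        exact abs_inner_le_of_norm_starProjection_le hx (starProjection_apply_mem U w)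
    _ = g * ‖U.starProjection w‖ + (h + g) * Q * ‖Uᗮ.starProjection w‖ := by
        rw [hw', norm_smul, Real.norm_eq_abs]; ring
    _ ≤ g * ‖w‖ + (h + g) * Q * ‖w‖ := by
        gcongr <;> exact norm_starProjection_apply_le _ w
    _ = (g + (h + g) * Q) * ‖w‖ := by ring

end Projection

section ResonantChain

variable {E : Type*} [NormedAddCommGroup E] [InnerProductSpace ℝ E]

/-- `ResonantChain Θ a S x y`: a chain of moves along vectors `θ ∈ Θ` leads from `x` to `y`, every
move joining two points of the layer `|⟪·, θ⟫| ≤ a ‖θ‖`; `S` collects the directions used. -/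
inductive ResonantChain (Θ : Set E) (a : ℝ) : Set E → E → E → Prop
  | refl (x : E) : ResonantChain Θ a ∅ x x
  | tail {S : Set E} {x y z θ : E} : ResonantChain Θ a S x y → θ ∈ Θ →
      |⟪y, θ⟫| ≤ a * ‖θ‖ → |⟪z, θ⟫| ≤ a * ‖θ‖ → y - z ∈ span ℝ {θ} →
      ResonantChain Θ a (insert θ S) x z

namespace ResonantChain

variable {Θ S T : Set E} {a : ℝ} {x y z : E}

lemma subset (h : ResonantChain Θ a S x y) : S ⊆ Θ := by
  induction h with
  | refl => exact empty_subset _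
  | tail _ hθ _ _ _ ih => exact insert_subset hθ ih

lemma trans (hxy : ResonantChain Θ a S x y) (hyz : ResonantChain Θ a T y z) :
    ResonantChain Θ a (S ∪ T) x z := by
  induction hyz with
  | refl => rwa [union_empty]
  | tail _ hθ hy hz hsub ih => rw [union_insert]; exact (ih hxy).tail hθ hy hz hsub

lemma symm (h : ResonantChain Θ a S x y) : ResonantChain Θ a S y x := by
  induction h with
  | refl x => exact .refl x
  | @tail S x y z θ _ hθ hy hz hsub ih =>
    have hstep : ResonantChain Θ a {θ} z y := by
      rw [← insert_empty_eq]
      exact (refl z).tail hθ hz hy (by rw [← neg_sub]; exact neg_mem hsub)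
    rw [← singleton_union]
    exact hstep.trans ih

lemma sub_mem_span (h : ResonantChain Θ a S x y) : x - y ∈ span ℝ S := by
  induction h with
  | refl x => simp
  | @tail S x y z θ _ _ _ _ hsub ih =>
    rw [← sub_add_sub_cancel x y z]
    exact add_mem (span_mono (subset_insert θ S) ih)
      (span_mono (singleton_subset_iff.2 (mem_insert θ S)) hsub)

variable [FiniteDimensional ℝ E] {Q : ℝ}

lemma norm_starProjection_span_le (hΘ : UniformlyTransverse Θ Q) (hQ : 1 ≤ Q) (ha : 0 ≤ a)
    (h : ResonantChain Θ a S x y) :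
    ‖(span ℝ S).starProjection x‖ ≤ (5 * Q) ^ finrank ℝ (span ℝ S) * a := by
  induction hm : finrank ℝ (span ℝ S) using Nat.strong_induction_on generalizing S x y with
  | _ m ihm
  induction h with
  | refl x =>
    rw [span_empty, starProjection_bot, zero_apply, norm_zero]
    positivity
  | @tail S x y _ θ hxy hθ hy _ _ ih =>
    by_cases hmem : θ ∈ span ℝ S
    · rw [span_insert_eq_span hmem] at hm ⊢
      exact ih hm
    -- Otherwise the directions used so far span a smaller space, so `x` and `y` are already close.
    rw [span_insert, sup_comm] at hm ⊢
    rw [finrank_sup_span_singleton hmem] at hm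
    set g : ℝ := (5 * Q) ^ finrank ℝ (span ℝ S) * a
    have hx : ‖(span ℝ S).starProjection x‖ ≤ g := ihm _ (by omega) hxy rfl
    have hy' : ‖(span ℝ S).starProjection y‖ ≤ g := ihm _ (by omega) hxy.symm rfl
    have hxθ : |⟪x, θ⟫| ≤ (a + 2 * g) * ‖θ‖ := calc
      |⟪x, θ⟫| = |⟪y, θ⟫ + ⟪x - y, θ⟫| := by rw [← inner_add_left, add_sub_cancel]
      _ ≤ |⟪y, θ⟫| + |⟪x - y, θ⟫| := abs_add_le _ _
      _ ≤ a * ‖θ‖ + (g + g) * ‖θ‖ := by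
        refine add_le_add hy ((abs_real_inner_le_norm _ _).trans ?_)
        gcongr
        exact (norm_sub_le_norm_starProjection_add hxy.sub_mem_span).trans (add_le_add hx hy')
      _ = (a + 2 * g) * ‖θ‖ := by ring
    have hag : a ≤ g := le_mul_of_one_le_left ha (one_le_pow₀ (by linarith))
    calc ‖(span ℝ S ⊔ span ℝ {θ}).starProjection x‖ ≤ g + (a + 2 * g + g) * Q :=
          norm_starProjection_sup_span_singleton_le (by positivity) (by positivity)
            (hΘ S hxy.subset θ hθ hmem) hx hxθ
      _ ≤ g * Q + (g + 2 * g + g) * Q := by gcongr; exact le_mul_of_one_le_right (by positivity) hQ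
      _ = (5 * Q) ^ m * a := by rw [← hm, pow_succ]; ring

lemma norm_sub_le (hΘ : UniformlyTransverse Θ Q) (hQ : 1 ≤ Q) (ha : 0 ≤ a)
    (h : ResonantChain Θ a S x y) : ‖x - y‖ ≤ 2 * ((5 * Q) ^ finrank ℝ E * a) := by
  have hfin : (5 * Q) ^ finrank ℝ (span ℝ S) * a ≤ (5 * Q) ^ finrank ℝ E * a := by
    gcongr
    · linarith
    · exact (span ℝ S).finrank_le
  calc ‖x - y‖ ≤ ‖(span ℝ S).starProjection x‖ + ‖(span ℝ S).starProjection y‖ :=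
        norm_sub_le_norm_starProjection_add h.sub_mem_span
    _ ≤ (5 * Q) ^ finrank ℝ E * a + (5 * Q) ^ finrank ℝ E * a :=
        add_le_add ((h.norm_starProjection_span_le hΘ hQ ha).trans hfin)
          ((h.symm.norm_starProjection_span_le hΘ hQ ha).trans hfin)
    _ = 2 * ((5 * Q) ^ finrank ℝ E * a) := by ring

end ResonantChain
end ResonantChain

section Box

variable {ι : Type*} [Fintype ι]

lemma volume_Icc_neg_update [DecidableEq ι] (a : ι → ℝ) (i : ι) (hai : 0 < a i) (h : ℝ) :
    volume (Icc (-Function.update a i h) (Function.update a i h)) =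
      ENNReal.ofReal (h / a i) * volume (Icc (-a) a) := by
  rw [Real.volume_Icc_pi, Real.volume_Icc_pi, ← Finset.mul_prod_erase _ _ (Finset.mem_univ i),
    ← Finset.mul_prod_erase _ (fun j => ENNReal.ofReal (a j - (-a) j)) (Finset.mem_univ i),
    ← mul_assoc, ← ENNReal.ofReal_mul' (by simp [hai.le])]
  congr 1
  · congr 1
    simp only [Function.update_self, Pi.neg_apply]
    field_simp
  · refine Finset.prod_congr rfl fun j hj => ?_
    simp only [Function.update_of_ne (Finset.ne_of_mem_erase hj), Pi.neg_apply]

-- The shear replacing the `i`-th coordinate by `t ⬝ᵥ x` maps the slab into a thinner box.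
lemma volume_Icc_inter_slab_le (a t : ι → ℝ) (i : ι) (hai : 0 < a i) (hti : t i ≠ 0)
    {h : ℝ} :
    volume (Icc (-a) a ∩ {x | |t ⬝ᵥ x| ≤ h}) ≤
      ENNReal.ofReal (h / (|t i| * a i)) * volume (Icc (-a) a) := by
  classical
  let A : Matrix ι ι ℝ := (1 : Matrix ι ι ℝ).updateRow i t
  have hdet : LinearMap.det A.toLin' = t i := by
    rw [LinearMap.det_toLin', ← Matrix.cramer_transpose_apply]; simp
  have hsub : Icc (-a) a ∩ {x | |t ⬝ᵥ x| ≤ h} ⊆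
      A.toLin' ⁻¹' Icc (-Function.update a i h) (Function.update a i h) := by
    rintro x ⟨⟨hax, hxa⟩, hx⟩
    have hAx : A.toLin' x = Function.update x i (t ⬝ᵥ x) := by
      ext j
      rcases eq_or_ne j i with rfl | hj
      · simp [A, Matrix.mulVec]
      · simp [A, Matrix.mulVec, Matrix.one_apply, dotProduct, hj]
    rw [mem_preimage, hAx, mem_Icc, ← Function.update_neg, update_le_update_iff,
      update_le_update_iff]
    exact ⟨⟨(abs_le.1 hx).1, fun j _ => hax j⟩, (abs_le.1 hx).2, fun j _ => hxa j⟩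
  calc volume (Icc (-a) a ∩ {x | |t ⬝ᵥ x| ≤ h})
      ≤ ENNReal.ofReal |(t i)⁻¹| * (ENNReal.ofReal (h / a i) * volume (Icc (-a) a)) := by
        rw [← volume_Icc_neg_update a i hai, ← hdet,
          ← Measure.addHaar_preimage_linearMap _ (by rwa [hdet])]
        exact measure_mono hsub
    _ = ENNReal.ofReal (h / (|t i| * a i)) * volume (Icc (-a) a) := by
        rw [← mul_assoc, ← ENNReal.ofReal_mul (abs_nonneg _), abs_inv]
        congr 2
        field_simp

variable {E : Type*} [NormedAddCommGroup E] [InnerProductSpace ℝ E]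

/-- The closed box centred at the origin with half-sides `a i` along the orthonormal basis `e`. -/
def orthoBox (e : OrthonormalBasis ι ℝ E) (a : ι → ℝ) : Set E :=
  {ξ | ∀ i, |⟪e i, ξ⟫| ≤ a i}

lemma orthoBox_eq_preimage (e : OrthonormalBasis ι ℝ E) (a : ι → ℝ) :
    orthoBox e a = (fun ξ i => ⟪e i, ξ⟫) ⁻¹' Icc (-a) a := by
  ext ξ
  simp only [orthoBox, mem_ofPred_eq, abs_le, mem_preimage, mem_Icc, Pi.le_def, Pi.neg_apply,
    forall_and]

lemma norm_le_sum_abs_inner (e : OrthonormalBasis ι ℝ E) (x : E) :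
    ‖x‖ ≤ ∑ i, |⟪e i, x⟫| := calc
  ‖x‖ = ‖∑ i, ⟪e i, x⟫ • e i‖ := by rw [e.sum_repr']
  _ ≤ ∑ i, ‖⟪e i, x⟫ • e i‖ := norm_sum_le _ _
  _ = ∑ i, |⟪e i, x⟫| := by simp only [norm_smul, e.norm_eq_one, mul_one, Real.norm_eq_abs]

lemma exists_norm_le_card_mul_abs_inner (e : OrthonormalBasis ι ℝ E) {x : E} (hx : x ≠ 0) :
    ∃ i, ‖x‖ ≤ Fintype.card ι * |⟪e i, x⟫| := by
  by_contra! hlt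
  have : Nonempty ι := by
    by_contra! hι
    exact hx (norm_le_zero_iff.1 (by simpa using norm_le_sum_abs_inner e x))
  have hsum : Fintype.card ι * ∑ i, |⟪e i, x⟫| < Fintype.card ι * ‖x‖ := by
    rw [Finset.mul_sum]
    refine (Finset.sum_lt_sum_of_nonempty Finset.univ_nonempty fun i _ => hlt i).trans_eq ?_
    simp
  exact (lt_of_mul_lt_mul_left hsum (Nat.cast_nonneg _)).not_ge (norm_le_sum_abs_inner e x)

variable [MeasurableSpace E] [BorelSpace E] [FiniteDimensional ℝ E]

lemma volume_preimage_inner (e : OrthonormalBasis ι ℝ E) (s : Set (ι → ℝ)) :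
    volume ((fun ξ i => ⟪e i, ξ⟫) ⁻¹' s) = volume s := by
  have hmp : MeasurePreserving (e.measurableEquiv.trans (MeasurableEquiv.toLp 2 (ι → ℝ)).symm) :=
    e.measurePreserving_measurableEquiv.trans
      (EuclideanSpace.volume_preserving_symm_measurableEquiv_toLp ι)
  rw [← hmp.measure_preimage_equiv s]
  congr! with ξ i
  exact (e.repr_apply_apply ξ i).symm

lemma volume_orthoBox (e : OrthonormalBasis ι ℝ E) (a : ι → ℝ) :
    volume (orthoBox e a) = ∏ i, ENNReal.ofReal (2 * a i) := by
  rw [orthoBox_eq_preimage, volume_preimage_inner, Real.volume_Icc_pi]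
  simp only [Pi.neg_apply, sub_neg_eq_add, two_mul]

lemma volume_orthoBox_inter_slab_le (e : OrthonormalBasis ι ℝ E) (a : ι → ℝ) (i : ι)
    (hai : 0 < a i) {θ : E} (hθ : ⟪e i, θ⟫ ≠ 0) {h : ℝ} :
    volume (orthoBox e a ∩ {ξ | |⟪θ, ξ⟫| ≤ h}) ≤
      ENNReal.ofReal (h / (|⟪e i, θ⟫| * a i)) * volume (orthoBox e a) := by
  have hslab : {ξ | |⟪θ, ξ⟫| ≤ h} = (fun ξ i => ⟪e i, ξ⟫) ⁻¹'
      {x | |(fun i => ⟪e i, θ⟫) ⬝ᵥ x| ≤ h} := by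
    ext ξ
    rw [mem_ofPred_eq, ← e.sum_inner_mul_inner]
    simp only [mem_preimage, mem_ofPred_eq, dotProduct, real_inner_comm]
  rw [hslab, orthoBox_eq_preimage, ← preimage_inter, volume_preimage_inner, volume_preimage_inner]
  exact volume_Icc_inter_slab_le a _ i hai hθ

end Box

section AdaptedBox
variable {E : Type*} [NormedAddCommGroup E] [InnerProductSpace ℝ E] [FiniteDimensional ℝ E]

/-- An orthonormal basis of `E` obtained by joining orthonormal bases of `V` and of `Vᗮ`. -/
def adaptedBasis (V : Submodule ℝ E) :
    OrthonormalBasis (Fin (finrank ℝ V) ⊕ Fin (finrank ℝ Vᗮ)) ℝ E :=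
  ((stdOrthonormalBasis ℝ V).prod (stdOrthonormalBasis ℝ Vᗮ)).map V.orthogonalDecomposition.symm

lemma adaptedBasis_inl (V : Submodule ℝ E) (i : Fin (finrank ℝ V)) :
    adaptedBasis V (Sum.inl i) = stdOrthonormalBasis ℝ V i := by
  simp [adaptedBasis]

lemma adaptedBasis_inr (V : Submodule ℝ E) (i : Fin (finrank ℝ Vᗮ)) :
    adaptedBasis V (Sum.inr i) = stdOrthonormalBasis ℝ Vᗮ i := by
  simp [adaptedBasis]

/-- The box with half-sides `s` along `V` and `R` along `Vᗮ`. -/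
def adaptedBox (V : Submodule ℝ E) (s R : ℝ) : Set E :=
  orthoBox (adaptedBasis V) (Sum.elim (fun _ => s) fun _ => R)

variable {V : Submodule ℝ E} {s R : ℝ} {ξ : E}

lemma norm_starProjection_le_of_mem_adaptedBox (hξ : ξ ∈ adaptedBox V s R) :
    ‖V.starProjection ξ‖ ≤ finrank ℝ V * s := calc
  ‖V.starProjection ξ‖ ≤ ∑ i, |⟪stdOrthonormalBasis ℝ V i, V.orthogonalProjectionOnto ξ⟫| :=
    norm_le_sum_abs_inner _ (V.orthogonalProjectionOnto ξ)
  _ ≤ ∑ _i : Fin (finrank ℝ V), s := by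
    gcongr with i
    rw [inner_orthogonalProjectionOnto_eq_of_mem_left, ← adaptedBasis_inl]
    exact hξ (Sum.inl i)
  _ = finrank ℝ V * s := by simp

lemma norm_le_of_mem_adaptedBox (hsR : s ≤ R) (hξ : ξ ∈ adaptedBox V s R) :
    ‖ξ‖ ≤ finrank ℝ E * R := calc
  ‖ξ‖ ≤ ∑ i, |⟪adaptedBasis V i, ξ⟫| := norm_le_sum_abs_inner _ ξ
  _ ≤ ∑ _i : Fin (finrank ℝ V) ⊕ Fin (finrank ℝ Vᗮ), R := by
    gcongr with i
    refine (hξ i).trans ?_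
    cases i
    exacts [hsR, le_rfl]
  _ = finrank ℝ E * R := by
    rw [Finset.sum_const, Finset.card_univ, ← finrank_eq_card_basis (adaptedBasis V).toBasis,
      nsmul_eq_mul]

lemma exists_norm_le_mul_abs_inner_adaptedBasis_inr {Q : ℝ} {θ : E} (hQ : 0 ≤ Q) (hθV : θ ∉ V)
    (hθ : ∀ u ∈ V, ‖θ‖ ≤ Q * ‖θ - u‖) :
    ∃ i, ‖θ‖ ≤ Q * finrank ℝ E * |⟪adaptedBasis V (Sum.inr i), θ⟫| := by
  have hne : Vᗮ.orthogonalProjectionOnto θ ≠ 0 := by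
    rwa [Ne, orthogonalProjectionOnto_eq_zero_iff, orthogonal_orthogonal]
  obtain ⟨i, hi⟩ := exists_norm_le_card_mul_abs_inner (stdOrthonormalBasis ℝ Vᗮ) hne
  refine ⟨i, ?_⟩
  rw [Fintype.card_fin, inner_orthogonalProjectionOnto_eq_of_mem_left, ← adaptedBasis_inr] at hi
  calc ‖θ‖ ≤ Q * ‖θ - V.starProjection θ‖ := hθ _ (starProjection_apply_mem V θ)
    _ = Q * ‖Vᗮ.orthogonalProjectionOnto θ‖ := by
      rw [← starProjection_orthogonal_val]; rfl
    _ ≤ Q * (finrank ℝ Vᗮ * |⟪adaptedBasis V (Sum.inr i), θ⟫|) := by gcongr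
    _ ≤ Q * (finrank ℝ E * |⟪adaptedBasis V (Sum.inr i), θ⟫|) := by
      gcongr
      exact Vᗮ.finrank_le
    _ = Q * finrank ℝ E * |⟪adaptedBasis V (Sum.inr i), θ⟫| := by ring

variable [MeasurableSpace E] [BorelSpace E]

lemma volume_adaptedBox (hs : 0 ≤ s) (hR : 0 ≤ R) :
    volume (adaptedBox V s R) =
      ENNReal.ofReal ((2 * s) ^ finrank ℝ V * (2 * R) ^ finrank ℝ Vᗮ) := by
  rw [adaptedBox, volume_orthoBox, Fintype.prod_sum_type, ENNReal.ofReal_mul (by positivity),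
    ENNReal.ofReal_pow (by positivity), ENNReal.ofReal_pow (by positivity)]
  simp

lemma volume_adaptedBox_inter_slab_le (hR : 0 < R) {Q b : ℝ} (hQ : 0 ≤ Q) (hb : 0 ≤ b) {θ : E}
    (hθV : θ ∉ V) (hθ : ∀ u ∈ V, ‖θ‖ ≤ Q * ‖θ - u‖) :
    volume (adaptedBox V s R ∩ {ξ | |⟪θ, ξ⟫| ≤ b * ‖θ‖}) ≤
      ENNReal.ofReal (b * (Q * finrank ℝ E) / R) * volume (adaptedBox V s R) := by
  obtain ⟨i, hi⟩ := exists_norm_le_mul_abs_inner_adaptedBasis_inr hQ hθV hθ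
  have hθ0 : 0 < ‖θ‖ := norm_pos_iff.2 fun h => hθV (h ▸ V.zero_mem)
  have hne : ⟪adaptedBasis V (Sum.inr i), θ⟫ ≠ 0 := fun h => by
    rw [h, abs_zero, mul_zero] at hi
    exact hi.not_gt hθ0
  refine (volume_orthoBox_inter_slab_le _ _ (Sum.inr i) hR hne).trans ?_
  gcongr ENNReal.ofReal ?_ * _
  rw [Sum.elim_inr, div_le_div_iff₀ (mul_pos (abs_pos.2 hne) hR) hR]
  calc b * ‖θ‖ * R ≤ b * (Q * finrank ℝ E * |⟪adaptedBasis V (Sum.inr i), θ⟫|) * R := by gcongr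
    _ = b * (Q * finrank ℝ E) * (|⟪adaptedBasis V (Sum.inr i), θ⟫| * R) := by ring

lemma volume_adaptedBox_inter_iUnion_slab_le (hR : 0 < R) {Θ S : Set E} (hfin : Θ.Finite)
    {Q b : ℝ} (hQ : 0 ≤ Q) (hΘ : UniformlyTransverse Θ Q) (hb : 0 ≤ b) (hS : S ⊆ Θ) :
    volume (adaptedBox (span ℝ S) s R ∩ ⋃ θ ∈ Θ \ span ℝ S, {ξ | |⟪θ, ξ⟫| ≤ b * ‖θ‖}) ≤
      ENNReal.ofReal (Θ.ncard * (b * (Q * finrank ℝ E) / R)) *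
        volume (adaptedBox (span ℝ S) s R) := by
  have hfin' : (Θ \ span ℝ S).Finite := hfin.subset sdiff_subset
  have hcard : hfin'.toFinset.card ≤ Θ.ncard := by
    rw [← ncard_eq_toFinset_card _ hfin']
    exact ncard_le_ncard sdiff_subset hfin
  calc volume (adaptedBox (span ℝ S) s R ∩ ⋃ θ ∈ Θ \ span ℝ S, {ξ | |⟪θ, ξ⟫| ≤ b * ‖θ‖})
      ≤ ∑ θ ∈ hfin'.toFinset, volume (adaptedBox (span ℝ S) s R ∩ {ξ | |⟪θ, ξ⟫| ≤ b * ‖θ‖}) := by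
        refine (measure_mono ?_).trans (measure_biUnion_finset_le _ _)
        simp only [hfin'.mem_toFinset, inter_iUnion₂, subset_rfl]
    _ ≤ hfin'.toFinset.card • (ENNReal.ofReal (b * (Q * finrank ℝ E) / R) *
          volume (adaptedBox (span ℝ S) s R)) := by
        refine Finset.sum_le_card_nsmul _ _ _ fun θ hθ => ?_
        obtain ⟨hθΘ, hθS⟩ := hfin'.mem_toFinset.1 hθ
        exact volume_adaptedBox_inter_slab_le hR hQ hb hθS (hΘ S hS θ hθΘ hθS)
    _ ≤ Θ.ncard • (ENNReal.ofReal (b * (Q * finrank ℝ E) / R) *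
          volume (adaptedBox (span ℝ S) s R)) := by gcongr
    _ = ENNReal.ofReal (Θ.ncard * (b * (Q * finrank ℝ E) / R)) *
          volume (adaptedBox (span ℝ S) s R) := by
        rw [nsmul_eq_mul, ← mul_assoc, ENNReal.ofReal_mul (Nat.cast_nonneg _),
          ENNReal.ofReal_natCast]

lemma volume_adaptedBox_inter_closedBall_le (hR : 0 < R) (hV : V ≠ ⊤) {L : ℝ} (hL : 0 ≤ L) :
    volume (adaptedBox V s R ∩ Metric.closedBall 0 L) ≤
      ENNReal.ofReal (L * finrank ℝ E / R) * volume (adaptedBox V s R) := by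
  obtain ⟨e, he, he0⟩ := Vᗮ.ne_bot_iff.1 (mt V.orthogonal_eq_bot_iff.1 hV)
  have heV : e ∉ V := fun h => he0 (inner_self_eq_zero.1 (he e h))
  have hdist : ∀ u ∈ V, ‖e‖ ≤ 1 * ‖e - u‖ := fun u hu => by
    rw [one_mul, ← sq_le_sq₀ (norm_nonneg _) (norm_nonneg _), norm_sub_sq_real,
      real_inner_comm, he u hu]
    linarith [sq_nonneg ‖u‖]
  refine le_trans (measure_mono (inter_subset_inter_right _ fun ξ hξ => ?_))
    ((volume_adaptedBox_inter_slab_le hR zero_le_one hL heV hdist).trans_eq (by rw [one_mul]))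
  rw [mem_closedBall_zero_iff] at hξ
  calc |⟪e, ξ⟫| ≤ ‖e‖ * ‖ξ‖ := abs_real_inner_le_norm e ξ
    _ ≤ L * ‖e‖ := by rw [mul_comm]; gcongr

end AdaptedBox

section Resonances

lemma innerₗ_nondegenerate {E : Type*} [NormedAddCommGroup E] [InnerProductSpace ℝ E] :
    (innerₗ E).Nondegenerate :=
  ⟨fun x hx => inner_self_eq_zero.1 (hx x), fun x hx => inner_self_eq_zero.1 (hx x)⟩

/-- The basis `θ₁, …, θ_d` dual to `B`, normalised by `⟪θᵢ, B j⟫ = 2π δᵢⱼ`. -/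
def dualLatticeBasis (B : Basis (Fin d) ℝ (EuclideanSpace ℝ (Fin d))) :
    Basis (Fin d) ℝ (EuclideanSpace ℝ (Fin d)) :=
  (LinearMap.BilinForm.dualBasis (innerₗ _) innerₗ_nondegenerate B).isUnitSMul
    (w := fun _ => 2 * Real.pi) fun _ => Real.two_pi_pos.ne'.isUnit

lemma dualLattice_subset_span_int (B : Basis (Fin d) ℝ (EuclideanSpace ℝ (Fin d))) :
    dualLattice B ⊆ span ℤ (range (dualLatticeBasis B)) := fun θ hθ => by
  refine ((dualLatticeBasis B).mem_span_iff_repr_mem ℤ θ).2 fun i => ?_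
  obtain ⟨k, hk⟩ := hθ (B i) (subset_span (mem_range_self i))
  refine ⟨k, ?_⟩
  rw [dualLatticeBasis, Basis.repr_isUnitSMul, LinearMap.BilinForm.dualBasis_repr_apply,
    innerₗ_apply_apply, hk, Units.smul_def, Units.val_inv_eq_inv_val, IsUnit.unit_spec,
    smul_eq_mul, inv_mul_cancel_left₀ Real.two_pi_pos.ne']
  rfl

lemma exists_uniformlyTransverse_Theta0 (B : Basis (Fin d) ℝ (EuclideanSpace ℝ (Fin d))) :
    ∃ K : ℝ, 1 ≤ K ∧ ∀ r T : ℝ, r ≤ T → span ℝ (Theta0 B r) = ⊤ →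
      UniformlyTransverse (Theta0 B r) (K * T ^ d) := by
  obtain ⟨K, hK, h⟩ := exists_uniformlyTransverse_of_subset_span_int (dualLatticeBasis B)
  rw [Fintype.card_fin] at h
  exact ⟨K, hK, fun r T hrT => h T _ (fun θ hθ => dualLattice_subset_span_int B hθ.1)
    fun θ hθ => hθ.2.trans hrT⟩

lemma exists_ncard_Theta0_le (B : Basis (Fin d) ℝ (EuclideanSpace ℝ (Fin d))) :
    ∃ K : ℝ, 1 ≤ K ∧ ∀ r T : ℝ, r ≤ T → 1 ≤ T →
      (Theta0 B r).Finite ∧ ((Theta0 B r).ncard : ℝ) ≤ K * T ^ d := by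
  obtain ⟨K, hK, h⟩ := exists_ncard_le_of_subset_span_int (dualLatticeBasis B)
  rw [Fintype.card_fin] at h
  exact ⟨K, hK, fun r T hrT hT => h T hT _ (fun θ hθ => dualLattice_subset_span_int B hθ.1)
    fun θ hθ => hθ.2.trans hrT⟩

variable {B : Basis (Fin d) ℝ (EuclideanSpace ℝ (Fin d))} {ρ r a : ℝ} {α : ℕ → ℝ}
  {V W : Submodule ℝ (EuclideanSpace ℝ (Fin d))} {ξ η θ : EuclideanSpace ℝ (Fin d)}

lemma abs_inner_le_of_mem_layer (hξ : ξ ∈ layer ρ a θ) : |⟪ξ, θ⟫| ≤ ρ ^ a * ‖θ‖ := by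
  rcases hξ with rfl | hlt
  · simp
  · exact hlt.le

lemma exists_resonantChain_of_mem_Ups (h : η ∈ Ups B ρ a r ξ) :
    ∃ S, ResonantChain (Theta0 B r) (ρ ^ a) S ξ η := by
  induction h with
  | refl => exact ⟨∅, .refl ξ⟩
  | tail _ hstep ih =>
    obtain ⟨S, hS⟩ := ih
    obtain ⟨θ, hθ, hy, hz, l, hl⟩ := hstep
    exact ⟨insert θ S, hS.tail hθ (abs_inner_le_of_mem_layer hy) (abs_inner_le_of_mem_layer hz)
      (hl ▸ smul_mem _ _ (mem_span_singleton_self θ))⟩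

lemma norm_starProjection_le_of_mem_Xi2 {Q : ℝ} (hρ : 0 ≤ ρ) (hQ : 1 ≤ Q)
    (hΘ : UniformlyTransverse (Theta0 B r) Q) (h : η ∈ Xi2 B ρ r α W) :
    ‖W.starProjection η‖ ≤ ρ ^ α (finrank ℝ W) + 2 * ((5 * Q) ^ d * ρ ^ α 1) := by
  obtain ⟨ξ, hξ, hη⟩ := h
  obtain ⟨S, hS⟩ := exists_resonantChain_of_mem_Ups hη
  calc ‖W.starProjection η‖ = ‖W.starProjection ξ - W.starProjection (ξ - η)‖ := by
        rw [← map_sub, sub_sub_cancel]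
    _ ≤ ‖W.starProjection ξ‖ + ‖W.starProjection (ξ - η)‖ := norm_sub_le _ _
    _ ≤ ρ ^ α (finrank ℝ W) + ‖ξ - η‖ :=
        add_le_add (le_of_lt hξ) (W.norm_starProjection_apply_le _)
    _ ≤ ρ ^ α (finrank ℝ W) + 2 * ((5 * Q) ^ d * ρ ^ α 1) := by
        gcongr
        simpa only [finrank_euclideanSpace_fin] using hS.norm_sub_le hΘ hQ (by positivity)

/-- The set removed from `Ξ₂(V)` in the definition of `Ξ(V)`: the union of `Ξ₂(W)` over the lattice
`r`-subspaces `W` of dimension larger than that of `V`. -/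
def higherResonances (B : Basis (Fin d) ℝ (EuclideanSpace ℝ (Fin d))) (ρ r : ℝ) (α : ℕ → ℝ)
    (V : Submodule ℝ (EuclideanSpace ℝ (Fin d))) : Set (EuclideanSpace ℝ (Fin d)) :=
  ⋃ W ∈ {W | IsLatticeSubspace B r W ∧ finrank ℝ V < finrank ℝ W}, Xi2 B ρ r α W

lemma higherResonances_top : higherResonances B ρ r α ⊤ = ∅ := by
  simp only [higherResonances, iUnion_eq_empty, finrank_top]
  exact fun W hW => absurd hW.2 W.finrank_le.not_gt

lemma higherResonances_subset {Q b L : ℝ} (hρ : 0 ≤ ρ) (hQ : 1 ≤ Q)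
    (hΘ : UniformlyTransverse (Theta0 B r) Q)
    (hb : ∀ m < d, ρ ^ α m + 2 * ((5 * Q) ^ d * ρ ^ α 1) ≤ b)
    (hL : ρ ^ α d + 2 * ((5 * Q) ^ d * ρ ^ α 1) ≤ L) :
    higherResonances B ρ r α V ⊆
      (⋃ θ ∈ Theta0 B r \ V, {ξ | |⟪θ, ξ⟫| ≤ b * ‖θ‖}) ∪ Metric.closedBall 0 L := by
  intro η hη
  obtain ⟨W, ⟨⟨S, hS, rfl⟩, hVW⟩, hηW⟩ := mem_iUnion₂.1 hη
  have hproj := norm_starProjection_le_of_mem_Xi2 hρ hQ hΘ hηW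
  rcases eq_or_ne (span ℝ S) ⊤ with htop | htop
  · right
    rw [htop, starProjection_top', one_apply_eq_self, finrank_top,
      finrank_euclideanSpace_fin] at hproj
    exact mem_closedBall_zero_iff.2 (hproj.trans hL)
  · left
    obtain ⟨θ, hθS, hθV⟩ := not_subset.1 fun hSV : S ⊆ V =>
      hVW.not_ge (Submodule.finrank_mono (span_le.2 hSV))
    have hdim : finrank ℝ (span ℝ S) < d := by
      simpa only [finrank_euclideanSpace_fin] using finrank_lt htop
    refine mem_iUnion₂.2 ⟨θ, ⟨hS hθS, hθV⟩, ?_⟩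
    rw [mem_ofPred_eq, real_inner_comm]
    exact abs_inner_le_of_norm_starProjection_le (hproj.trans (hb _ hdim)) (subset_span hθS)

lemma volume_adaptedBox_inter_higherResonances_le {Q b L s R : ℝ} (hρ : 0 ≤ ρ) (hQ : 1 ≤ Q)
    (hfin : (Theta0 B r).Finite) (hΘ : UniformlyTransverse (Theta0 B r) Q) (hb₀ : 0 ≤ b)
    (hL₀ : 0 ≤ L) (hb : ∀ m < d, ρ ^ α m + 2 * ((5 * Q) ^ d * ρ ^ α 1) ≤ b)
    (hL : ρ ^ α d + 2 * ((5 * Q) ^ d * ρ ^ α 1) ≤ L) (hV : IsLatticeSubspace B r V) (hR : 0 < R) :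
    volume (adaptedBox V s R ∩ higherResonances B ρ r α V) ≤
      ENNReal.ofReal (((Theta0 B r).ncard * (b * (Q * d)) + L * d) / R) *
        volume (adaptedBox V s R) := by
  rcases eq_or_ne V ⊤ with rfl | hVtop
  · simp [higherResonances_top]
  obtain ⟨S, hS, rfl⟩ := hV
  have hslabs := volume_adaptedBox_inter_iUnion_slab_le (s := s) hR hfin (by linarith) hΘ hb₀ hS
  have hball := volume_adaptedBox_inter_closedBall_le (s := s) hR hVtop hL₀
  rw [finrank_euclideanSpace_fin] at hslabs hball
  rw [add_div, mul_div_assoc, ENNReal.ofReal_add (by positivity) (by positivity), add_mul]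
  refine le_trans (measure_mono (inter_subset_inter_right _
    (higherResonances_subset hρ hQ hΘ hb hL))) ?_
  rw [inter_union_distrib_left]
  exact (measure_union_le _ _).trans (add_le_add hslabs hball)

end Resonances

section Parameters

variable {B : Basis (Fin d) ℝ (EuclideanSpace ℝ (Fin d))} {ρ r κ : ℝ} {α : ℕ → ℝ}

namespace GoodParams

lemma alpha_le (h : GoodParams B ρ r κ α) {m n : ℕ} (hmn : m ≤ n) (hn : n ≤ d) : α m ≤ α n := by
  obtain ⟨-, hκ, -, hα, -⟩ := h
  induction n, hmn using Nat.le_induction with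
  | base => exact le_rfl
  | succ k _ ih =>
    have hgap : 0 ≤ 2 * κ * (d : ℝ) ^ 2 := by positivity
    linarith [ih (by omega), hα k (by omega)]

lemma rpow_alpha_le_rpow_alpha (h : GoodParams B ρ r κ α) {m n : ℕ} (hmn : m ≤ n) (hn : n ≤ d) :
    ρ ^ α m ≤ ρ ^ α n :=
  Real.rpow_le_rpow_of_exponent_le h.1 (h.alpha_le hmn hn)

lemma rpow_alpha_le_self (h : GoodParams B ρ r κ α) {m : ℕ} (hm : m ≤ d) : ρ ^ α m ≤ ρ := by
  refine (h.rpow_alpha_le_rpow_alpha hm le_rfl).trans ?_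
  obtain ⟨hρ, -, -, -, hαd, -⟩ := h
  simpa only [Real.rpow_one] using Real.rpow_le_rpow_of_exponent_le hρ hαd.le

lemma one_le_rpow (h : GoodParams B ρ r κ α) : 1 ≤ ρ ^ κ :=
  Real.one_le_rpow h.1 h.2.1.le

-- The gap `2 κ d²` between consecutive exponents pays for `2 d²` factors of size `ρ ^ κ`.
lemma pow_mul_rpow_alpha_le (h : GoodParams B ρ r κ α) (hd : 1 ≤ d) {k : ℕ} (hk : k ≤ 2 * d ^ 2) :
    (ρ ^ κ) ^ k * ρ ^ α (d - 1) ≤ ρ := by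
  refine le_trans ?_ (h.rpow_alpha_le_self le_rfl)
  have hpow : (ρ ^ κ) ^ k ≤ (ρ ^ κ) ^ (2 * d ^ 2) := pow_le_pow_right₀ h.one_le_rpow hk
  obtain ⟨hρ, -, -, hα, -⟩ := h
  have hρ₀ : 0 < ρ := by linarith
  have hgap := hα (d - 1) (by omega)
  rw [Nat.sub_add_cancel hd] at hgap
  calc (ρ ^ κ) ^ k * ρ ^ α (d - 1) ≤ (ρ ^ κ) ^ (2 * d ^ 2) * ρ ^ α (d - 1) := by gcongr
    _ = ρ ^ (κ * (2 * d ^ 2 : ℕ) + α (d - 1)) := by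
      rw [← Real.rpow_mul_natCast hρ₀.le, ← Real.rpow_add hρ₀]
    _ ≤ ρ ^ α d := by
      refine Real.rpow_le_rpow_of_exponent_le hρ ?_
      push_cast
      linarith

lemma displacement_le (h : GoodParams B ρ r κ α) (hd : 2 ≤ d) {K : ℝ} (hK : 0 ≤ K) :
    2 * ((5 * (K * (ρ ^ κ) ^ d)) ^ d * ρ ^ α 1) ≤
      2 * (5 * K) ^ d * ((ρ ^ κ) ^ d ^ 2 * ρ ^ α (d - 1)) := by
  have hα : ρ ^ α 1 ≤ ρ ^ α (d - 1) := h.rpow_alpha_le_rpow_alpha (by omega) (by omega)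
  have hρ : 0 < ρ := zero_lt_one.trans_le h.1
  calc 2 * ((5 * (K * (ρ ^ κ) ^ d)) ^ d * ρ ^ α 1)
      ≤ 2 * ((5 * (K * (ρ ^ κ) ^ d)) ^ d * ρ ^ α (d - 1)) := by gcongr
    _ = 2 * (5 * K) ^ d * ((ρ ^ κ) ^ d ^ 2 * ρ ^ α (d - 1)) := by
      rw [← mul_assoc 5, mul_pow (5 * K), ← pow_mul, ← sq]
      ring

lemma rpow_alpha_add_displacement_le (h : GoodParams B ρ r κ α) (hd : 2 ≤ d) {K : ℝ} (hK : 0 ≤ K)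
    {m : ℕ} (hm : m < d) :
    ρ ^ α m + 2 * ((5 * (K * (ρ ^ κ) ^ d)) ^ d * ρ ^ α 1) ≤
      (1 + 2 * (5 * K) ^ d) * ((ρ ^ κ) ^ d ^ 2 * ρ ^ α (d - 1)) := by
  have hρ : 0 < ρ := zero_lt_one.trans_le h.1
  have hα : ρ ^ α m ≤ (ρ ^ κ) ^ d ^ 2 * ρ ^ α (d - 1) :=
    (h.rpow_alpha_le_rpow_alpha (by omega) (by omega)).trans
      (le_mul_of_one_le_left (by positivity) (one_le_pow₀ h.one_le_rpow))
  rw [add_mul, one_mul]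
  exact add_le_add hα (h.displacement_le hd hK)

lemma self_rpow_alpha_add_displacement_le (h : GoodParams B ρ r κ α) (hd : 2 ≤ d) {K : ℝ}
    (hK : 0 ≤ K) :
    ρ ^ α d + 2 * ((5 * (K * (ρ ^ κ) ^ d)) ^ d * ρ ^ α 1) ≤ (1 + 2 * (5 * K) ^ d) * ρ := by
  have hgap : (ρ ^ κ) ^ d ^ 2 * ρ ^ α (d - 1) ≤ ρ := h.pow_mul_rpow_alpha_le (by omega) (by omega)
  rw [add_mul, one_mul]
  exact add_le_add (h.rpow_alpha_le_self le_rfl) ((h.displacement_le hd hK).trans (by gcongr))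

lemma mul_pow_mul_rpow_alpha_add_le (h : GoodParams B ρ r κ α) (hd : 2 ≤ d) {A K M : ℝ}
    (hA : 0 ≤ A) (hK : 0 ≤ K) (hM : 0 ≤ M) :
    M * (ρ ^ κ) ^ d * (A * ((ρ ^ κ) ^ d ^ 2 * ρ ^ α (d - 1)) * (K * (ρ ^ κ) ^ d * d)) +
      A * ρ * d ≤ d * A * (M * K + 1) * ρ := calc
  _ = d * A * (M * K * ((ρ ^ κ) ^ (d + d ^ 2 + d) * ρ ^ α (d - 1)) + ρ) := by ring
  _ ≤ d * A * (M * K * ρ + ρ) := by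
    gcongr
    exact h.pow_mul_rpow_alpha_le (by omega) (by nlinarith)
  _ = d * A * (M * K + 1) * ρ := by ring

end GoodParams

lemma exists_volume_adaptedBox_inter_higherResonances_le_half (hd : 2 ≤ d)
    (B : Basis (Fin d) ℝ (EuclideanSpace ℝ (Fin d))) :
    ∃ C : ℝ, 1 ≤ C ∧ ∀ (ρ r κ : ℝ) (α : ℕ → ℝ), GoodParams B ρ r κ α →
      ∀ V, IsLatticeSubspace B r V → ∀ s R : ℝ, C * ρ ≤ R →
        volume (adaptedBox V s R ∩ higherResonances B ρ r α V) ≤ volume (adaptedBox V s R) / 2 := by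
  obtain ⟨K, hK, htransverse⟩ := exists_uniformlyTransverse_Theta0 B
  obtain ⟨M, hM, hcard⟩ := exists_ncard_Theta0_le B
  set A : ℝ := 1 + 2 * (5 * K) ^ d
  have hA : 1 ≤ A := le_add_of_nonneg_right (by positivity)
  have hd₁ : (1 : ℝ) ≤ d := by exact_mod_cast (by omega : 1 ≤ d)
  have hMK : 1 ≤ M * K := one_le_mul_of_one_le_of_one_le hM hK
  refine ⟨2 * (d * A * (M * K + 1)), ?_, fun ρ r κ α h V hV s R hR => ?_⟩
  · linarith [one_le_mul_of_one_le_of_one_le (one_le_mul_of_one_le_of_one_le hd₁ hA)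
      (by linarith : 1 ≤ M * K + 1)]
  have ⟨hρ₁, _, _, _, _, hr, hspan⟩ := h
  have hρ : 0 < ρ := zero_lt_one.trans_le hρ₁
  have hT := h.one_le_rpow
  obtain ⟨hfin, hncard⟩ := hcard r _ hr hT
  set b : ℝ := A * ((ρ ^ κ) ^ d ^ 2 * ρ ^ α (d - 1))
  set Q : ℝ := K * (ρ ^ κ) ^ d
  have hQ : 1 ≤ Q := one_le_mul_of_one_le_of_one_le hK (one_le_pow₀ hT)
  have hR₀ : 0 < R := lt_of_lt_of_le (by positivity) hR
  have hfraction : (Theta0 B r).ncard * (b * (Q * d)) + A * ρ * d ≤ R / 2 := calc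
    (Theta0 B r).ncard * (b * (Q * d)) + A * ρ * d
        ≤ M * (ρ ^ κ) ^ d * (b * (Q * d)) + A * ρ * d := by gcongr
    _ ≤ d * A * (M * K + 1) * ρ :=
      h.mul_pow_mul_rpow_alpha_add_le hd (by positivity) (by positivity) (by positivity)
    _ ≤ R / 2 := by linarith
  calc volume (adaptedBox V s R ∩ higherResonances B ρ r α V)
      ≤ ENNReal.ofReal (((Theta0 B r).ncard * (b * (Q * d)) + A * ρ * d) / R) *
          volume (adaptedBox V s R) :=
        volume_adaptedBox_inter_higherResonances_le hρ.le hQ hfin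
          (htransverse r _ hr hspan) (by positivity) (by positivity)
          (fun m hm => h.rpow_alpha_add_displacement_le hd (by positivity) hm)
          (h.self_rpow_alpha_add_displacement_le hd (by positivity)) hV hR₀
    _ ≤ ENNReal.ofReal 2⁻¹ * volume (adaptedBox V s R) := by
        gcongr
        rw [div_le_iff₀ hR₀]
        linarith
    _ = volume (adaptedBox V s R) / 2 := by
        rw [ENNReal.ofReal_inv_of_pos two_pos, ENNReal.ofReal_ofNat, mul_comm, div_eq_mul_inv]

end Parameters

section LowerBound

lemma half_measure_le_measure_sdiff {X : Type*} [MeasurableSpace X] {μ : Measure X} {s t : Set X}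
    (hs : μ s ≠ ⊤) (hst : μ (s ∩ t) ≤ μ s / 2) : μ s / 2 ≤ μ (s \ t) := calc
  μ s / 2 = μ s - μ s / 2 := (ENNReal.sub_half hs).symm
  _ ≤ μ s - μ (s ∩ t) := by gcongr
  _ ≤ μ (s \ t) := tsub_le_iff_left.2 (measure_le_inter_add_sdiff μ s t)

variable {B : Basis (Fin d) ℝ (EuclideanSpace ℝ (Fin d))} {ρ r R : ℝ} {α : ℕ → ℝ}
  {V : Submodule ℝ (EuclideanSpace ℝ (Fin d))}

lemma adaptedBox_sdiff_higherResonances_subset (hd : 1 ≤ d) (hρ : 0 < ρ)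
    (hR : ρ ^ α (finrank ℝ V) ≤ R) :
    adaptedBox V (ρ ^ α (finrank ℝ V) / (2 * d)) (R / (2 * d)) \ higherResonances B ρ r α V ⊆
      Xi B ρ r α V ∩ Metric.ball 0 R := by
  rintro ξ ⟨hbox, hres⟩
  have hcancel : ∀ x : ℝ, d * (x / (2 * d)) = x / 2 := fun x => by
    rw [← mul_div_assoc, mul_comm (d : ℝ) x, mul_div_mul_right x 2 (Nat.cast_ne_zero.2 (by omega))]
  have hs : 0 < ρ ^ α (finrank ℝ V) := by positivity
  have hVd : (finrank ℝ V : ℝ) ≤ d := by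
    exact_mod_cast V.finrank_le.trans_eq finrank_euclideanSpace_fin
  have hproj : ‖projV V ξ‖ < ρ ^ α (finrank ℝ V) := calc
    ‖projV V ξ‖ ≤ finrank ℝ V * (ρ ^ α (finrank ℝ V) / (2 * d)) :=
      norm_starProjection_le_of_mem_adaptedBox hbox
    _ ≤ d * (ρ ^ α (finrank ℝ V) / (2 * d)) := by gcongr
    _ = ρ ^ α (finrank ℝ V) / 2 := hcancel _
    _ < ρ ^ α (finrank ℝ V) := half_lt_self hs
  have hball : ‖ξ‖ < R := calc
    ‖ξ‖ ≤ d * (R / (2 * d)) := by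
      simpa only [finrank_euclideanSpace_fin] using norm_le_of_mem_adaptedBox (by gcongr) hbox
    _ = R / 2 := hcancel R
    _ < R := half_lt_self (hs.trans_le hR)
  exact ⟨⟨⟨ξ, hproj, .refl⟩, hres⟩, mem_ball_zero_iff.2 hball⟩

lemma volume_adaptedBox_div_two_mul (hρ : 0 ≤ ρ) (hR : 0 ≤ R) :
    volume (adaptedBox V (ρ ^ α (finrank ℝ V) / (2 * d)) (R / (2 * d))) =
      ENNReal.ofReal ((1 / d) ^ d * ρ ^ (finrank ℝ V * α (finrank ℝ V)) *
        R ^ (d - finrank ℝ V)) := by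
  have hdim : finrank ℝ V + finrank ℝ Vᗮ = d := by
    rw [V.finrank_add_finrank_orthogonal, finrank_euclideanSpace_fin]
  have hscale : ∀ x : ℝ, 2 * (x / (2 * d)) = 1 / d * x := fun x => by field_simp
  have hpow : ((1 : ℝ) / d) ^ d = (1 / d) ^ finrank ℝ V * (1 / d) ^ finrank ℝ Vᗮ := by
    rw [← pow_add, hdim]
  rw [volume_adaptedBox (by positivity) (by positivity), hscale, hscale, mul_pow, mul_pow,
    mul_comm (finrank ℝ V : ℝ), Real.rpow_mul_natCast hρ, hpow, ← Nat.eq_sub_of_add_eq' hdim]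
  congr 1
  ring

end LowerBound

/-- Lemma 5.15: there are c > 0, C₀ ≥ 1, ρ₀ ≥ 1 such that for all ρ ≥ ρ₀,
every lattice r-subspace V ∈ 𝒱(r,n) with n ≤ d and every R ≥ C₀ρ,
vol(Ξ(V) ∩ B(0,R)) ≥ c ρ^{nα_n} R^{d−n}. -/
theorem Xi_volume_lower_bound
    (d : ℕ) (hd : 2 ≤ d) (B : Basis (Fin d) ℝ (EuclideanSpace ℝ (Fin d)))
    (κ : ℝ) (α : ℕ → ℝ) :
    ∃ c C₀ ρ₀ : ℝ, 0 < c ∧ 1 ≤ C₀ ∧ 1 ≤ ρ₀ ∧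
      ∀ ρ r : ℝ, ρ₀ ≤ ρ → GoodParams B ρ r κ α →
      ∀ n : ℕ, n ≤ d →
      ∀ V : Submodule ℝ (EuclideanSpace ℝ (Fin d)), IsLatticeSubspace B r V →
        Module.finrank ℝ V = n →
      ∀ R : ℝ, C₀ * ρ ≤ R →
        ENNReal.ofReal (c * ρ ^ ((n : ℝ) * α n) * R ^ (d - n)) ≤
          MeasureTheory.volume
            (Xi B ρ r α V ∩ Metric.ball (0 : EuclideanSpace ℝ (Fin d)) R) := by
  obtain ⟨C, hC, hhalf⟩ := exists_volume_adaptedBox_inter_higherResonances_le_half hd B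
  have hd₁ : (1 : ℝ) ≤ 2 * d := by exact_mod_cast (by omega : 1 ≤ 2 * d)
  have hC₀ : 1 ≤ 2 * d * C := one_le_mul_of_one_le_of_one_le hd₁ hC
  refine ⟨(1 / d) ^ d / 2, 2 * d * C, 1, by positivity, hC₀, le_rfl, ?_⟩
  rintro ρ r hρ hgood n hn V hV rfl R hR
  have hρR : ρ ≤ R := (le_mul_of_one_le_left (by linarith) hC₀).trans hR
  set box := adaptedBox V (ρ ^ α (finrank ℝ V) / (2 * d)) (R / (2 * d))
  have hvol : volume box = _ := volume_adaptedBox_div_two_mul (by linarith) (by linarith)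
  have hCR : C * ρ ≤ R / (2 * d) := by
    rw [le_div_iff₀ (by linarith)]
    linarith
  calc ENNReal.ofReal ((1 / d) ^ d / 2 * ρ ^ (finrank ℝ V * α (finrank ℝ V)) *
        R ^ (d - finrank ℝ V)) = volume box / 2 := by
        rw [hvol, div_mul_eq_mul_div, div_mul_eq_mul_div, ENNReal.ofReal_div_of_pos two_pos,
          ENNReal.ofReal_ofNat]
    _ ≤ volume (box \ higherResonances B ρ r α V) :=
        half_measure_le_measure_sdiff (hvol ▸ ENNReal.ofReal_ne_top)
          (hhalf ρ r κ α hgood V hV _ _ hCR)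
    _ ≤ volume (Xi B ρ r α V ∩ Metric.ball 0 R) :=
        measure_mono (adaptedBox_sdiff_higherResonances_subset (by omega) (by linarith)
          ((hgood.rpow_alpha_le_self hn).trans hρR))
end
end

section
/- There exist constants 0 < c ≤ C, depending only on d and Γ, and ρ₀, depending only on d, Γ, κ and the exponents α_j, such that for all ρ ≥ ρ₀ the surface measure on the unit sphere S^{d−1} satisfies σ(S(ρ)) ≤ C ρ^{α_d − 1} and c ≤ σ(T(ρ)) ≤ C, where for θ ∈ Θ_r one sets S(θ; ρ) = {Ω ∈ S^{d−1} : |Ω · θ|/|θ| < 16 ρ^{α_{d−1}−1}}, S(ρ) = ∪_{θ∈Θ_r} S(θ; ρ), and T(ρ) = S^{d−1} \ S(ρ). -/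
noncomputable section

open Set Submodule Module MeasureTheory Relation
open scoped RealInnerProductSpace

variable {d : ℕ}

/-!
In polar coordinates about `θ`, with all angles taken in `[0, π]` and a global sign absorbing the
last half turn, the unit sphere of `ℝ^d` is a union of two Lipschitz images of `[0, π]^(d - 1)`.
The first angle is the one with `θ`, so a direction with `|Ω · θ| / |θ| < ε` has a first angle whose
cosine is smaller than `ε` in absolute value; such angles form a set of measure `O(ε)`, hence so do
such directions. There are `O(r ^ d)` vectors in `Θ_r`, and `r ≤ ρ ^ κ`, so that
`σ(S(ρ)) = O(ρ ^ (κ d + α_{d-1} - 1)) = O(ρ ^ (α_d - 1))`. This tends to `0` since `α_d < 1`, and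
eventually `T(ρ)` keeps at least half of the sphere.
-/

section

open Real Metric Filter
open scoped NNReal ENNReal

theorem hausdorffMeasure_fin_pi (n : ℕ) : (μH[n] : Measure (Fin n → ℝ)) = volume := by
  simpa only [Fintype.card_fin] using hausdorffMeasure_pi_real (ι := Fin n)

theorem ofReal_half_le_measure_sdiff {X : Type*} [MeasurableSpace X] {μ : Measure X} {s t : Set X}
    {m : ℝ} (hm : 0 ≤ m) (hs : ENNReal.ofReal m ≤ μ s) (ht : μ t ≤ ENNReal.ofReal (m / 2)) :
    ENNReal.ofReal (m / 2) ≤ μ (s \ t) :=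
  calc ENNReal.ofReal (m / 2) = ENNReal.ofReal m - ENNReal.ofReal (m / 2) := by
        rw [← ENNReal.ofReal_sub _ (by positivity), sub_half]
    _ ≤ μ s - μ t := tsub_le_tsub hs ht
    _ ≤ μ (s \ t) := le_measure_sdiff

theorem rpow_pow_mul_rpow_le {ρ κ a b : ℝ} (hρ : 1 ≤ ρ) (hab : a + κ * d ≤ b) :
    (ρ ^ κ) ^ d * ρ ^ (a - 1) ≤ ρ ^ (b - 1) := by
  have hρ0 : 0 < ρ := by linarith
  rw [← rpow_mul_natCast hρ0.le, ← rpow_add hρ0]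
  exact rpow_le_rpow_of_exponent_le hρ (by linarith)

theorem abs_sub_pi_div_two_le {t : ℝ} (ht : t ∈ Icc 0 π) : |t - π / 2| ≤ π / 2 * |cos t| := by
  have h := mul_abs_le_abs_sin (x := π / 2 - t) (abs_le.2 ⟨by linarith [ht.2], by linarith [ht.1]⟩)
  rw [sin_pi_div_two_sub, abs_sub_comm, div_mul_eq_mul_div, div_le_iff₀ pi_pos] at h
  linarith

theorem volume_angles_abs_cos_lt_le (n : ℕ) (ε : ℝ) :
    volume {z : Fin (n + 1) → ℝ | z ∈ Icc 0 (fun _ => π) ∧ |cos (z 0)| < ε} ≤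
      ENNReal.ofReal (π ^ (n + 1) * ε) := by
  have hbox : {z : Fin (n + 1) → ℝ | z ∈ Icc 0 (fun _ => π) ∧ |cos (z 0)| < ε} ⊆
      Icc (Fin.cons (π / 2 - π / 2 * ε) 0) (Fin.cons (π / 2 + π / 2 * ε) fun _ => π) := by
    rintro z ⟨hz, hε⟩
    have h := (abs_sub_pi_div_two_le ⟨hz.1 0, hz.2 0⟩).trans
      (mul_le_mul_of_nonneg_left hε.le pi_div_two_pos.le)
    rw [abs_le] at h
    exact ⟨Fin.cases (by rw [Fin.cons_zero]; linarith) fun i => hz.1 i.succ,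
      Fin.cases (by rw [Fin.cons_zero]; linarith) fun i => hz.2 i.succ⟩
  refine (measure_mono hbox).trans_eq ?_
  rw [Real.volume_Icc_pi, Fin.prod_univ_succ]
  simp only [Fin.cons_zero, Fin.cons_succ, Pi.zero_apply, sub_zero, Finset.prod_const,
    Finset.card_univ, Fintype.card_fin]
  rw [← ENNReal.ofReal_pow pi_nonneg, ← ENNReal.ofReal_mul' (by positivity)]
  ring_nf

section AngularParam

variable {E : Type*} [NormedAddCommGroup E] {n : ℕ}

/-- `f` parametrizes the unit sphere of `E` by angles in `[0, π]`, up to a sign. Allowing the sign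
keeps all angles in the same interval and makes the zero-dimensional sphere `{e, -e}` the base case
of the inductive construction. -/
structure IsAngularParam (f : (Fin n → ℝ) → E) : Prop where
  lipschitzWith : LipschitzWith (2 * n) f
  norm_eq_one : ∀ z, ‖f z‖ = 1
  exists_eq_or_eq_neg : ∀ x, ‖x‖ = 1 →
    ∃ z ∈ Icc (0 : Fin n → ℝ) (fun _ => π), x = f z ∨ x = -f z

theorem IsAngularParam.hausdorffMeasure_le [MeasurableSpace E] [BorelSpace E]
    {f : (Fin n → ℝ) → E} (hf : IsAngularParam f) {s : Set E} (hs : s ⊆ sphere 0 1) :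
    μH[n] s ≤ 2 * ((2 * n) ^ n * volume {z ∈ Icc 0 fun _ => π | f z ∈ s ∨ -f z ∈ s}) := by
  set A := {z ∈ Icc 0 fun _ => π | f z ∈ s ∨ -f z ∈ s}
  have hcover : s ⊆ f '' A ∪ (-f) '' A := by
    intro x hx
    obtain ⟨z, hz, rfl | rfl⟩ := hf.exists_eq_or_eq_neg x (mem_sphere_zero_iff_norm.1 (hs hx))
    · exact Or.inl ⟨z, ⟨hz, Or.inl hx⟩, rfl⟩
    · exact Or.inr ⟨z, ⟨hz, Or.inr hx⟩, rfl⟩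
  have himage {h : (Fin n → ℝ) → E} (hh : LipschitzWith (2 * n) h) :
      μH[n] (h '' A) ≤ (2 * n) ^ n * volume A := by
    simpa [hausdorffMeasure_fin_pi] using hh.hausdorffMeasure_image_le n.cast_nonneg A
  calc μH[n] s ≤ μH[n] (f '' A) + μH[n] ((-f) '' A) :=
        (measure_mono hcover).trans (measure_union_le _ _)
    _ ≤ 2 * ((2 * n) ^ n * volume A) := by
        rw [two_mul]
        exact add_le_add (himage hf.lipschitzWith) (himage hf.lipschitzWith.neg)

end AngularParam

section Polar

variable {E : Type*} [NormedAddCommGroup E] [InnerProductSpace ℝ E] {n : ℕ} {e x : E}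

/-- Polar coordinates about the axis `e`: the first angle is the one with `e`, the others are fed to
the map `g` into the orthogonal hyperplane. -/
def polarExtend (e : E) (g : (Fin n → ℝ) → (ℝ ∙ e)ᗮ) (z : Fin (n + 1) → ℝ) : E :=
  cos (z 0) • e + sin (z 0) • (g (Fin.tail z) : E)

theorem inner_polarExtend_right (he : ‖e‖ = 1) (g : (Fin n → ℝ) → (ℝ ∙ e)ᗮ)
    (z : Fin (n + 1) → ℝ) : ⟪polarExtend e g z, e⟫ = cos (z 0) := by
  simp [polarExtend, inner_add_left, real_inner_smul_left, he,
    mem_orthogonal_singleton_iff_inner_left.1 (g (Fin.tail z)).2]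

theorem norm_polarExtend (he : ‖e‖ = 1) {g : (Fin n → ℝ) → (ℝ ∙ e)ᗮ} (hg : ∀ z, ‖g z‖ = 1)
    (z : Fin (n + 1) → ℝ) : ‖polarExtend e g z‖ = 1 := by
  have horth : ⟪cos (z 0) • e, sin (z 0) • (g (Fin.tail z) : E)⟫ = 0 := by
    simp [real_inner_smul_left, real_inner_smul_right,
      mem_orthogonal_singleton_iff_inner_right.1 (g (Fin.tail z)).2]
  rw [← sq_eq_sq₀ (norm_nonneg _) zero_le_one, sq, polarExtend,
    norm_add_sq_eq_norm_sq_add_norm_sq_real horth]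
  have hg' : ‖(g (Fin.tail z) : E)‖ = 1 := hg _
  simp [norm_smul, he, hg', ← sq]

theorem lipschitzWith_polarExtend (he : ‖e‖ = 1) {g : (Fin n → ℝ) → (ℝ ∙ e)ᗮ} {L : ℝ≥0}
    (hL : LipschitzWith L g) (hg : ∀ z, ‖g z‖ = 1) :
    LipschitzWith (L + 2) (polarExtend e g) := by
  refine LipschitzWith.of_dist_le_mul fun z w => ?_
  have hzw : |z 0 - w 0| ≤ dist z w := dist_le_pi_dist z w 0
  have htail : dist (Fin.tail z) (Fin.tail w) ≤ dist z w :=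
    (dist_pi_le_iff dist_nonneg).2 fun i => dist_le_pi_dist z w i.succ
  have hgzw : ‖(g (Fin.tail z) : E) - g (Fin.tail w)‖ ≤ L * dist z w := by
    rw [← dist_eq_norm]
    exact (hL.dist_le_mul _ _).trans (by gcongr)
  have hsplit : polarExtend e g z - polarExtend e g w =
      (cos (z 0) - cos (w 0)) • e +
        (sin (z 0) - sin (w 0)) • (g (Fin.tail z) : E) +
        sin (w 0) • ((g (Fin.tail z) : E) - g (Fin.tail w)) := by
    simp only [polarExtend]
    module
  calc dist (polarExtend e g z) (polarExtend e g w)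
      ≤ |cos (z 0) - cos (w 0)| * ‖e‖ +
          |sin (z 0) - sin (w 0)| * ‖(g (Fin.tail z) : E)‖ +
          |sin (w 0)| * ‖(g (Fin.tail z) : E) - g (Fin.tail w)‖ := by
        rw [dist_eq_norm, hsplit]
        exact norm_add₃_le.trans_eq (by simp only [norm_smul, norm_eq_abs])
    _ ≤ dist z w * 1 + dist z w * 1 + 1 * (L * dist z w) := by
        gcongr
        · exact (abs_cos_sub_cos_le _ _).trans hzw
        · exact he.le
        · exact (abs_sin_sub_sin_le _ _).trans hzw
        · exact (hg _).le
        · exact abs_sin_le_one _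
    _ = (L + 2 : ℝ≥0) * dist z w := by push_cast; ring

theorem exists_eq_cos_smul_add (he : ‖e‖ = 1) (hx : ‖x‖ = 1) :
    ∃ t ∈ Icc 0 π, ∃ v : (ℝ ∙ e)ᗮ, ‖v‖ = sin t ∧ x = cos t • e + v := by
  have hex : |⟪e, x⟫| ≤ 1 := by simpa [he, hx] using abs_real_inner_le_norm e x
  have hv : ⟪e, x - ⟪e, x⟫ • e⟫ = 0 := by
    simp [inner_sub_right, real_inner_smul_right, he]
  have hnorm : ‖x - ⟪e, x⟫ • e‖ ^ 2 = 1 - ⟪e, x⟫ ^ 2 := by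
    rw [norm_sub_sq_real, real_inner_smul_right, real_inner_comm, norm_smul, he, hx, mul_one,
      norm_eq_abs, sq_abs]
    ring
  refine ⟨arccos ⟪e, x⟫, ⟨arccos_nonneg _, arccos_le_pi _⟩,
    ⟨x - ⟪e, x⟫ • e, mem_orthogonal_singleton_iff_inner_right.2 hv⟩, ?_, ?_⟩
  · rw [sin_arccos, ← hnorm, sqrt_sq (norm_nonneg _), Submodule.coe_norm]
  · rw [cos_arccos (abs_le.1 hex).1 (abs_le.1 hex).2, add_sub_cancel]

theorem cons_mem_Icc_angles {t : ℝ} {z : Fin n → ℝ} (ht : t ∈ Icc 0 π)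
    (hz : z ∈ Icc 0 fun _ => π) : (Fin.cons t z : Fin (n + 1) → ℝ) ∈ Icc 0 fun _ => π :=
  ⟨Fin.cases ht.1 hz.1, Fin.cases ht.2 hz.2⟩

theorem isAngularParam_polarExtend (he : ‖e‖ = 1) {g : (Fin n → ℝ) → (ℝ ∙ e)ᗮ}
    (hg : IsAngularParam g) : IsAngularParam (polarExtend e g) where
  lipschitzWith := by
    have h := lipschitzWith_polarExtend he hg.lipschitzWith hg.norm_eq_one
    rwa [show (2 * n + 2 : ℝ≥0) = 2 * (n + 1 : ℕ) by push_cast; ring] at h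
  norm_eq_one := norm_polarExtend he hg.norm_eq_one
  exists_eq_or_eq_neg x hx := by
    obtain ⟨t, ht, v, hv, rfl⟩ := exists_eq_cos_smul_add he hx
    obtain ⟨z, hz, hvz⟩ : ∃ z ∈ Icc (0 : Fin n → ℝ) (fun _ => π),
        v = sin t • g z ∨ v = -(sin t • g z) := by
      rcases eq_or_ne v 0 with rfl | hv0
      · rw [norm_zero] at hv
        exact ⟨0, left_mem_Icc.2 fun _ => pi_pos.le, by simp [← hv]⟩
      · obtain ⟨z, hz, h⟩ := hg.exists_eq_or_eq_neg (‖v‖⁻¹ • v) (norm_smul_inv_norm (𝕜 := ℝ) hv0)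
        refine ⟨z, hz, ?_⟩
        rwa [inv_smul_eq_iff₀ (norm_ne_zero_iff.2 hv0), inv_smul_eq_iff₀ (norm_ne_zero_iff.2 hv0),
          hv, smul_neg] at h
    rcases hvz with rfl | rfl
    · exact ⟨Fin.cons t z, cons_mem_Icc_angles ht hz, Or.inl (by simp [polarExtend])⟩
    · have ht' : π - t ∈ Icc 0 π := ⟨by linarith [ht.2], by linarith [ht.1]⟩
      refine ⟨Fin.cons (π - t) z, cons_mem_Icc_angles ht' hz, Or.inr ?_⟩
      simp only [polarExtend, Fin.cons_zero, Fin.tail_cons, cos_pi_sub, sin_pi_sub,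
        Submodule.coe_neg, Submodule.coe_smul]
      module

theorem isAngularParam_const (hE : finrank ℝ E = 1) (he : ‖e‖ = 1) :
    IsAngularParam fun _ : Fin 0 → ℝ => e where
  lipschitzWith := LipschitzWith.const' e
  norm_eq_one _ := he
  exists_eq_or_eq_neg x hx := by
    have he0 : e ≠ 0 := norm_ne_zero_iff.1 (he.trans_ne one_ne_zero)
    obtain ⟨c, rfl⟩ := (finrank_eq_one_iff_of_nonzero' e he0).1 hE x
    rw [norm_smul, he, mul_one, norm_eq_abs] at hx
    refine ⟨0, left_mem_Icc.2 fun _ => pi_nonneg, ?_⟩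
    rcases eq_or_eq_neg_of_abs_eq hx with rfl | rfl <;> simp

theorem finrank_orthogonal_span_singleton_of_norm_eq_one (hE : finrank ℝ E = n + 1)
    (he : ‖e‖ = 1) : finrank ℝ (ℝ ∙ e)ᗮ = n :=
  have : Fact (finrank ℝ E = n + 1) := ⟨hE⟩
  finrank_orthogonal_span_singleton (norm_ne_zero_iff.1 (he.trans_ne one_ne_zero))

theorem exists_isAngularParam (hE : finrank ℝ E = n + 1) :
    ∃ f : (Fin n → ℝ) → E, IsAngularParam f := by
  induction n generalizing E with
  | zero =>
    have : Nontrivial E := nontrivial_of_finrank_eq_succ hE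
    obtain ⟨e, he⟩ := exists_norm_eq E zero_le_one
    exact ⟨fun _ => e, isAngularParam_const hE he⟩
  | succ n ih =>
    have : Nontrivial E := nontrivial_of_finrank_eq_succ hE
    obtain ⟨e, he⟩ := exists_norm_eq E zero_le_one
    obtain ⟨g, hg⟩ := ih (finrank_orthogonal_span_singleton_of_norm_eq_one hE he)
    exact ⟨_, isAngularParam_polarExtend he hg⟩

theorem closedBall_subset_orthogonalProjectionOnto_image_sphere (he : ‖e‖ = 1) :
    closedBall 0 1 ⊆ (ℝ ∙ e)ᗮ.orthogonalProjectionOnto '' sphere (0 : E) 1 := by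
  intro v hv
  rw [mem_closedBall_zero_iff] at hv
  have horth : ⟪√(1 - ‖v‖ ^ 2) • e, (v : E)⟫ = 0 := by
    rw [real_inner_smul_left, mem_orthogonal_singleton_iff_inner_right.1 v.2, mul_zero]
  refine ⟨√(1 - ‖v‖ ^ 2) • e + v, ?_, ?_⟩
  · have h1 : 0 ≤ 1 - ‖v‖ ^ 2 := by nlinarith [norm_nonneg v]
    rw [mem_sphere_zero_iff_norm, ← sq_eq_sq₀ (norm_nonneg _) zero_le_one, sq,
      norm_add_sq_eq_norm_sq_add_norm_sq_real horth, norm_smul, he,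
      norm_of_nonneg (sqrt_nonneg _), mul_one, mul_self_sqrt h1, Submodule.coe_norm]
    ring
  · rw [map_add, map_smul, orthogonalProjectionOnto_mem_subspace_eq_self,
      orthogonalProjectionOnto_orthogonal_apply_eq_zero (mem_span_singleton_self e), smul_zero,
      zero_add]

end Polar

section SurfaceMeasure

variable {E : Type*} [NormedAddCommGroup E] [InnerProductSpace ℝ E] [MeasurableSpace E]
  [BorelSpace E] {n : ℕ}

theorem hausdorffMeasure_sphere_lt_top (hE : finrank ℝ E = n + 1) :
    μH[n] (sphere (0 : E) 1) < ⊤ := by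
  obtain ⟨f, hf⟩ := exists_isAngularParam hE
  refine (hf.hausdorffMeasure_le Subset.rfl).trans_lt ?_
  have hbox : volume {z ∈ Icc 0 fun _ => π | f z ∈ sphere 0 1 ∨ -f z ∈ sphere 0 1} < ⊤ :=
    (measure_mono (sep_subset _ _)).trans_lt isCompact_Icc.measure_lt_top
  finiteness

theorem hausdorffMeasure_sphere_pos (hE : finrank ℝ E = n + 1) :
    0 < μH[n] (sphere (0 : E) 1) := by
  have : Nontrivial E := nontrivial_of_finrank_eq_succ hE
  have : FiniteDimensional ℝ E := .of_finrank_eq_succ hE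
  obtain ⟨e, he⟩ := exists_norm_eq E zero_le_one
  have hrank : finrank ℝ (ℝ ∙ e)ᗮ = n := finrank_orthogonal_span_singleton_of_norm_eq_one hE he
  calc 0 < μH[finrank ℝ (ℝ ∙ e)ᗮ] (closedBall (0 : (ℝ ∙ e)ᗮ) 1) :=
        measure_closedBall_pos _ _ one_pos
    _ ≤ μH[n] ((ℝ ∙ e)ᗮ.orthogonalProjectionOnto '' sphere (0 : E) 1) := by
        rw [hrank]
        exact measure_mono (closedBall_subset_orthogonalProjectionOnto_image_sphere he)
    _ ≤ μH[n] (sphere (0 : E) 1) := by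
        simpa using (lipschitzWith_orthogonalProjectionOnto _).hausdorffMeasure_image_le
          n.cast_nonneg (sphere (0 : E) 1)

theorem exists_hausdorffMeasure_sphere_eq_ofReal (hd : 1 ≤ d) :
    ∃ m : ℝ, 0 < m ∧
      μH[(d : ℝ) - 1] {Ω : EuclideanSpace ℝ (Fin d) | ‖Ω‖ = 1} = ENNReal.ofReal m := by
  obtain ⟨n, rfl⟩ := Nat.exists_eq_add_of_le' hd
  have hsphere : {Ω : EuclideanSpace ℝ (Fin (n + 1)) | ‖Ω‖ = 1} = sphere 0 1 := by
    ext; simp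
  rw [hsphere, Nat.cast_succ, add_sub_cancel_right]
  have hfin := (hausdorffMeasure_sphere_lt_top (n := n)
    (finrank_euclideanSpace_fin (𝕜 := ℝ))).ne
  exact ⟨_, ENNReal.toReal_pos (hausdorffMeasure_sphere_pos finrank_euclideanSpace_fin).ne' hfin,
    (ENNReal.ofReal_toReal hfin).symm⟩

/-- The directions within `ε` of being orthogonal to `θ`: the set `S(θ; ρ)` of the paper, with
`ε = 16 ρ ^ (α (d - 1) - 1)`. -/
def equatorialStrip (θ : E) (ε : ℝ) : Set E :=
  {Ω | ‖Ω‖ = 1 ∧ |⟪Ω, θ⟫| / ‖θ‖ < ε}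

theorem hausdorffMeasure_equatorialStrip_le (hE : finrank ℝ E = n + 2) {θ : E} (hθ : θ ≠ 0)
    (ε : ℝ) : μH[(n + 1 : ℕ)] (equatorialStrip θ ε) ≤
      ENNReal.ofReal (2 * (2 * (n + 1) * π) ^ (n + 1) * ε) := by
  set e : E := ‖θ‖⁻¹ • θ
  have he : ‖e‖ = 1 := norm_smul_inv_norm (𝕜 := ℝ) hθ
  have hinner (x : E) : |⟪x, θ⟫| / ‖θ‖ = |⟪x, e⟫| := by
    rw [real_inner_smul_right, abs_mul, abs_inv, abs_norm, div_eq_inv_mul]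
  obtain ⟨g, hg⟩ := exists_isAngularParam (finrank_orthogonal_span_singleton_of_norm_eq_one hE he)
  have hf := isAngularParam_polarExtend he hg
  have hangle : {z ∈ Icc 0 fun _ => π | polarExtend e g z ∈ equatorialStrip θ ε ∨
      -polarExtend e g z ∈ equatorialStrip θ ε} ⊆
      {z | z ∈ Icc 0 (fun _ => π) ∧ |cos (z 0)| < ε} := by
    rintro z ⟨hz, ⟨-, h⟩ | ⟨-, h⟩⟩ <;>
    · rw [hinner] at h
      simpa [inner_polarExtend_right he] using And.intro hz h
  calc μH[(n + 1 : ℕ)] (equatorialStrip θ ε)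
      ≤ 2 * ((2 * (n + 1 : ℕ)) ^ (n + 1) * ENNReal.ofReal (π ^ (n + 1) * ε)) := by
        refine (hf.hausdorffMeasure_le fun x hx => mem_sphere_zero_iff_norm.2 hx.1).trans ?_
        gcongr
        exact (measure_mono hangle).trans (volume_angles_abs_cos_lt_le n ε)
    _ = ENNReal.ofReal (2 * ((2 * (n + 1 : ℕ)) ^ (n + 1) * (π ^ (n + 1) * ε))) := by
        rw [ENNReal.ofReal_mul zero_le_two,
          ENNReal.ofReal_mul (p := (2 * (n + 1 : ℕ)) ^ (n + 1)) (by positivity),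
          ENNReal.ofReal_pow (by positivity), ENNReal.ofReal_mul zero_le_two,
          ENNReal.ofReal_natCast, ENNReal.ofReal_ofNat]
    _ = ENNReal.ofReal (2 * (2 * (n + 1) * π) ^ (n + 1) * ε) := by
        rw [mul_pow _ π, Nat.cast_succ]
        ring_nf

end SurfaceMeasure

section DualLattice

variable {B : Basis (Fin d) ℝ (EuclideanSpace ℝ (Fin d))} {r : ℝ}
  {θ : EuclideanSpace ℝ (Fin d)}

/-- The integer coordinates `⟪θ, B i⟫ / 2π` of a dual lattice vector `θ`. Rounding extends them to
all of `ℝ^d` and changes nothing on the dual lattice. -/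
def dualCoord (B : Basis (Fin d) ℝ (EuclideanSpace ℝ (Fin d))) (θ : EuclideanSpace ℝ (Fin d))
    (i : Fin d) : ℤ :=
  round (⟪θ, B i⟫ / (2 * π))

theorem inner_basis_eq_two_pi_mul_dualCoord (hθ : θ ∈ dualLattice B) (i : Fin d) :
    ⟪θ, B i⟫ = 2 * π * dualCoord B θ i := by
  obtain ⟨k, hk⟩ := hθ (B i) (subset_span (mem_range_self i))
  rw [dualCoord, hk, mul_div_cancel_left₀ _ two_pi_pos.ne', round_intCast]

theorem injOn_dualCoord (B : Basis (Fin d) ℝ (EuclideanSpace ℝ (Fin d))) :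
    InjOn (dualCoord B) (dualLattice B) := fun θ hθ η hη h =>
  InnerProductSpace.ext_inner_right_basis B fun i => by
    rw [inner_basis_eq_two_pi_mul_dualCoord hθ, inner_basis_eq_two_pi_mul_dualCoord hη, h]

theorem abs_dualCoord_le (hθ : θ ∈ dualLattice B) (i : Fin d) :
    |(dualCoord B θ i : ℝ)| ≤ (∑ j, ‖B j‖) * ‖θ‖ := by
  have hBi : ‖B i‖ ≤ ∑ j, ‖B j‖ :=
    Finset.single_le_sum (f := fun j => ‖B j‖) (fun _ _ => norm_nonneg _) (Finset.mem_univ i)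
  calc |(dualCoord B θ i : ℝ)| ≤ 2 * π * |(dualCoord B θ i : ℝ)| :=
        le_mul_of_one_le_left (abs_nonneg _) (by linarith [pi_gt_three])
    _ = |⟪θ, B i⟫| := by
        rw [inner_basis_eq_two_pi_mul_dualCoord hθ, abs_mul, abs_of_pos two_pi_pos]
    _ ≤ ‖θ‖ * ‖B i‖ := abs_real_inner_le_norm θ (B i)
    _ ≤ (∑ j, ‖B j‖) * ‖θ‖ := by rw [mul_comm]; gcongr

theorem mapsTo_dualCoord_Theta (B : Basis (Fin d) ℝ (EuclideanSpace ℝ (Fin d))) (r : ℝ) :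
    MapsTo (dualCoord B) (Theta B r)
      (Finset.Icc (fun _ => -⌊(∑ j, ‖B j‖) * r⌋) fun _ => ⌊(∑ j, ‖B j‖) * r⌋ :
        Finset (Fin d → ℤ)) := by
  rintro θ ⟨hθ, -, hθr⟩
  have hcoord (i : Fin d) : |dualCoord B θ i| ≤ ⌊(∑ j, ‖B j‖) * r⌋ := by
    rw [Int.le_floor, Int.cast_abs]
    exact (abs_dualCoord_le hθ i).trans (by gcongr)
  exact Finset.mem_coe.2 (Finset.mem_Icc.2
    ⟨fun i => (abs_le.1 (hcoord i)).1, fun i => (abs_le.1 (hcoord i)).2⟩)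

theorem finite_Theta (B : Basis (Fin d) ℝ (EuclideanSpace ℝ (Fin d))) (r : ℝ) :
    (Theta B r).Finite :=
  .of_injOn (mapsTo_dualCoord_Theta B r) ((injOn_dualCoord B).mono fun _ h => h.1)
    (Finset.finite_toSet _)

theorem one_le_sum_norm_mul_of_mem_Theta (hθ : θ ∈ Theta B r) : 1 ≤ (∑ j, ‖B j‖) * r := by
  obtain ⟨hdual, hne, hr⟩ := hθ
  obtain ⟨i, hi⟩ : ∃ i, dualCoord B θ i ≠ 0 := by
    by_contra! h
    refine hne (InnerProductSpace.ext_inner_right_basis B fun i => ?_)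
    rw [inner_basis_eq_two_pi_mul_dualCoord hdual, h, Int.cast_zero, mul_zero, inner_zero_left]
  calc (1 : ℝ) ≤ |(dualCoord B θ i : ℝ)| := by exact_mod_cast Int.one_le_abs hi
    _ ≤ (∑ j, ‖B j‖) * ‖θ‖ := abs_dualCoord_le hdual i
    _ ≤ (∑ j, ‖B j‖) * r := by gcongr

theorem ncard_Theta_le (B : Basis (Fin d) ℝ (EuclideanSpace ℝ (Fin d))) (hr : 0 ≤ r) :
    ((Theta B r).ncard : ℝ) ≤ (3 * ((∑ j, ‖B j‖) * r)) ^ d := by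
  rcases (Theta B r).eq_empty_or_nonempty with hempty | ⟨θ, hθ⟩
  · rw [hempty, ncard_empty, Nat.cast_zero]
    positivity
  set R := (∑ j, ‖B j‖) * r
  have hR : 1 ≤ R := one_le_sum_norm_mul_of_mem_Theta hθ
  have hcard : (Theta B r).ncard ≤ (⌊R⌋ + 1 - -⌊R⌋).toNat ^ d := by
    refine (ncard_le_ncard_of_injOn _ (mapsTo_dualCoord_Theta B r)
      ((injOn_dualCoord B).mono fun _ h => h.1) (Finset.finite_toSet _)).trans_eq ?_
    simp only [ncard_coe_finset, Pi.card_Icc, Int.card_Icc, Finset.prod_const, Finset.card_univ,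
      Fintype.card_fin, R]
  calc ((Theta B r).ncard : ℝ) ≤ ((⌊R⌋ + 1 - -⌊R⌋).toNat : ℝ) ^ d := by exact_mod_cast hcard
    _ ≤ (3 * R) ^ d := by
        gcongr
        have hnonneg : 0 ≤ ⌊R⌋ + 1 - -⌊R⌋ := by linarith [Int.floor_nonneg.2 (zero_le_one.trans hR)]
        rw [← Int.cast_natCast, Int.toNat_of_nonneg hnonneg]
        push_cast
        linarith [Int.floor_le R]

/-- The resonant directions `S(ρ)` of the paper, with cutoff `r` and
`ε = 16 ρ ^ (α (d - 1) - 1)`. -/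
def resonantDirections (B : Basis (Fin d) ℝ (EuclideanSpace ℝ (Fin d))) (r ε : ℝ) :
    Set (EuclideanSpace ℝ (Fin d)) :=
  ⋃ θ ∈ Theta B r, equatorialStrip θ ε

theorem resonantDirections_mono (B : Basis (Fin d) ℝ (EuclideanSpace ℝ (Fin d))) (ε : ℝ) :
    Monotone fun r => resonantDirections B r ε := fun _ _ h =>
  biUnion_subset_biUnion_left fun _ hθ => ⟨hθ.1, hθ.2.1, hθ.2.2.trans h⟩

theorem exists_hausdorffMeasure_resonantDirections_le (hd : 2 ≤ d)
    (B : Basis (Fin d) ℝ (EuclideanSpace ℝ (Fin d))) :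
    ∃ K : ℝ, 0 ≤ K ∧ ∀ r ε : ℝ, 0 ≤ r → 0 ≤ ε →
      μH[(d : ℝ) - 1] (resonantDirections B r ε) ≤ ENNReal.ofReal (K * (r ^ d * ε)) := by
  obtain ⟨n, rfl⟩ := Nat.exists_eq_add_of_le' hd
  have hdim : ((n + 2 : ℕ) : ℝ) - 1 = (n + 1 : ℕ) := by push_cast; ring
  set K := 2 * (2 * (n + 1) * π) ^ (n + 1)
  refine ⟨(3 * ∑ j, ‖B j‖) ^ (n + 2) * K, by positivity, fun r ε hr hε => ?_⟩
  have hfin := finite_Theta B r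
  calc μH[((n + 2 : ℕ) : ℝ) - 1] (resonantDirections B r ε)
      ≤ ∑ θ ∈ hfin.toFinset, μH[(n + 1 : ℕ)] (equatorialStrip θ ε) := by
        rw [hdim, resonantDirections]
        simpa using measure_biUnion_finset_le hfin.toFinset fun θ => equatorialStrip θ ε
    _ ≤ (Theta B r).ncard * ENNReal.ofReal (K * ε) := by
        rw [ncard_eq_toFinset_card _ hfin, ← nsmul_eq_mul]
        exact Finset.sum_le_card_nsmul _ _ _ fun θ hθ =>
          hausdorffMeasure_equatorialStrip_le finrank_euclideanSpace_fin
            (hfin.mem_toFinset.1 hθ).2.1 ε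
    _ = ENNReal.ofReal ((Theta B r).ncard * (K * ε)) := by
        rw [ENNReal.ofReal_mul (Nat.cast_nonneg _), ENNReal.ofReal_natCast]
    _ ≤ ENNReal.ofReal ((3 * ∑ j, ‖B j‖) ^ (n + 2) * K * (r ^ (n + 2) * ε)) := by
        refine ENNReal.ofReal_le_ofReal ?_
        calc (Theta B r).ncard * (K * ε) ≤ (3 * ((∑ j, ‖B j‖) * r)) ^ (n + 2) * (K * ε) := by
              gcongr
              exact ncard_Theta_le B hr
          _ = _ := by ring

theorem GoodParams.add_mul_le {κ ρ : ℝ} {α : ℕ → ℝ} (hd : 1 ≤ d) (h : GoodParams B ρ r κ α) :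
    α (d - 1) + κ * d ≤ α d := by
  obtain ⟨-, hκ, -, hα, -⟩ := h
  have hgap := hα (d - 1) (by omega)
  rw [Nat.sub_add_cancel hd] at hgap
  have hd1 : (1 : ℝ) ≤ d := by exact_mod_cast hd
  nlinarith [mul_nonneg hκ.le (by nlinarith : (0 : ℝ) ≤ 2 * (d : ℝ) ^ 2 - d)]

end DualLattice

theorem sphere_resonant_measure_bounds_general
    (d : ℕ) (hd : 2 ≤ d) (B : Basis (Fin d) ℝ (EuclideanSpace ℝ (Fin d))) :
    ∃ c C : ℝ, 0 < c ∧ c ≤ C ∧ ∀ b < 1, ∀ᶠ ρ : ℝ in atTop,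
      ∀ r κ a : ℝ, r ≤ ρ ^ κ → a + κ * d ≤ b →
      μH[(d : ℝ) - 1] (resonantDirections B r (16 * ρ ^ (a - 1))) ≤
        ENNReal.ofReal (C * ρ ^ (b - 1)) ∧
      ENNReal.ofReal c ≤ μH[(d : ℝ) - 1] ({Ω : EuclideanSpace ℝ (Fin d) | ‖Ω‖ = 1} \
        resonantDirections B r (16 * ρ ^ (a - 1))) ∧
      μH[(d : ℝ) - 1] ({Ω : EuclideanSpace ℝ (Fin d) | ‖Ω‖ = 1} \
        resonantDirections B r (16 * ρ ^ (a - 1))) ≤ ENNReal.ofReal C := by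
  obtain ⟨K, hK, hres⟩ := exists_hausdorffMeasure_resonantDirections_le hd B
  obtain ⟨m, hm, hsphere⟩ := exists_hausdorffMeasure_sphere_eq_ofReal (one_le_two.trans hd)
  refine ⟨m / 2, 16 * K + m, by positivity, by linarith, fun b hb => ?_⟩
  have hsmall : ∀ᶠ ρ : ℝ in atTop, (16 * K + m) * ρ ^ (b - 1) ≤ m / 2 := by
    have hlim := (tendsto_rpow_neg_atTop (sub_pos.2 hb)).const_mul (16 * K + m)
    rw [mul_zero, neg_sub] at hlim
    exact hlim.eventually_le_const (half_pos hm)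
  filter_upwards [hsmall, eventually_ge_atTop 1] with ρ hρ hρ1 r κ a hr hab
  have hS : μH[(d : ℝ) - 1] (resonantDirections B r (16 * ρ ^ (a - 1))) ≤
      ENNReal.ofReal ((16 * K + m) * ρ ^ (b - 1)) := by
    refine (measure_mono (resonantDirections_mono B _ hr)).trans
      ((hres _ _ (by positivity) (by positivity)).trans (ENNReal.ofReal_le_ofReal ?_))
    calc K * ((ρ ^ κ) ^ d * (16 * ρ ^ (a - 1))) = 16 * K * ((ρ ^ κ) ^ d * ρ ^ (a - 1)) := by ring
      _ ≤ (16 * K + m) * ρ ^ (b - 1) := by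
          gcongr
          · linarith
          · exact rpow_pow_mul_rpow_le hρ1 hab
  refine ⟨hS, ofReal_half_le_measure_sdiff hm.le hsphere.ge
    (hS.trans (ENNReal.ofReal_le_ofReal hρ)), (measure_mono sdiff_subset).trans ?_⟩
  rw [hsphere]
  exact ENNReal.ofReal_le_ofReal (by linarith)

end

/-- Lemma 5.11: with σ the (d−1)-dimensional surface (Hausdorff) measure on
the unit sphere, there are 0 < c ≤ C depending only on d and Γ such that for large ρ,
σ(S(ρ)) ≤ C ρ^{α_d − 1} and c ≤ σ(T(ρ)) ≤ C, where
S(θ;ρ) = {Ω ∈ S^{d−1} : |Ω·θ|/|θ| < 16ρ^{α_{d−1}−1}}, S(ρ) = ∪_{θ∈Θ_r} S(θ;ρ) and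
T(ρ) = S^{d−1} \ S(ρ). -/
theorem sphere_resonant_measure_bounds
    (d : ℕ) (hd : 2 ≤ d) (B : Basis (Fin d) ℝ (EuclideanSpace ℝ (Fin d))) :
    ∃ c C : ℝ, 0 < c ∧ c ≤ C ∧ ∀ (κ : ℝ) (α : ℕ → ℝ), ∃ ρ₀ : ℝ,
      ∀ ρ r : ℝ, ρ₀ ≤ ρ → GoodParams B ρ r κ α →
      (MeasureTheory.Measure.hausdorffMeasure ((d : ℝ) - 1)
          (⋃ θ ∈ Theta B r,
            {Ω : EuclideanSpace ℝ (Fin d) | ‖Ω‖ = 1 ∧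
              |⟪Ω, θ⟫| / ‖θ‖ < 16 * ρ ^ (α (d - 1) - 1)})
        ≤ ENNReal.ofReal (C * ρ ^ (α d - 1))) ∧
      (ENNReal.ofReal c ≤
        MeasureTheory.Measure.hausdorffMeasure ((d : ℝ) - 1)
          ({Ω : EuclideanSpace ℝ (Fin d) | ‖Ω‖ = 1} \
            ⋃ θ ∈ Theta B r,
              {Ω : EuclideanSpace ℝ (Fin d) | ‖Ω‖ = 1 ∧
                |⟪Ω, θ⟫| / ‖θ‖ < 16 * ρ ^ (α (d - 1) - 1)})) ∧
      (MeasureTheory.Measure.hausdorffMeasure ((d : ℝ) - 1)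
          ({Ω : EuclideanSpace ℝ (Fin d) | ‖Ω‖ = 1} \
            ⋃ θ ∈ Theta B r,
              {Ω : EuclideanSpace ℝ (Fin d) | ‖Ω‖ = 1 ∧
                |⟪Ω, θ⟫| / ‖θ‖ < 16 * ρ ^ (α (d - 1) - 1)})
        ≤ ENNReal.ofReal C) := by
  obtain ⟨c, C, hc, hcC, h⟩ := sphere_resonant_measure_bounds_general d hd B
  refine ⟨c, C, hc, hcC, fun κ α => ?_⟩
  obtain ⟨ρ₀, hρ₀⟩ := Filter.eventually_atTop.1 (Filter.eventually_imp_distrib_left.2 (h (α d)))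
  exact ⟨ρ₀, fun ρ r hρ hgood => hρ₀ ρ hρ hgood.2.2.2.2.1 r κ _ hgood.2.2.2.2.2.1
    (hgood.add_mul_le (by omega))⟩
end
end

section
/- Fix d ≥ 2, exponents γ < 2 and σ < 1, and constants A > 0 and K ≥ 1. There exist constants c > 0, c₂ ≥ 1 and ρ₀ ≥ 1, depending only on d, γ, σ, A, K, such that the following holds for all ρ ≥ ρ₀. Let δ ∈ (0, 1], let b ∈ ℝ^d with c₂ ≤ |b| ≤ Kρ, and let G₁, G₂ : ℝ^d → ℝ be continuous functions satisfying, for all ξ ∈ ℝ^d, |G_j(ξ)| ≤ A ρ^γ for j = 1, 2 and |G₁(ξ) − G₂(ξ − b)| ≤ A |b| ρ^σ. Set g_j(ξ) = |ξ|² + G_j(ξ) and 𝒳 = 𝒜(g₁; ρ, δ) ∩ (𝒜(g₂; ρ, δ) + b). Then every ξ ∈ 𝒳 satisfies ξ ≠ 0, ξ ≠ b, and the angle φ(ξ, ξ − b) between ξ and ξ − b satisfies φ(ξ, ξ − b) ≥ c |b| / ρ. -/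
noncomputable section

open Set Submodule Module MeasureTheory Relation
open scoped RealInnerProductSpace

variable {d : ℕ}

/-!
On the two shells both `‖ξ‖` and `‖ξ - b‖` are `(1 + o(1)) ρ`, because `γ < 2`, and the difference
of their squares is `o(‖b‖ ρ)`, because `σ < 1`; hence `‖ξ‖ - ‖ξ - b‖ = o(‖b‖)`.
Two vectors `x`, `y` enclosing an angle `φ` satisfy
`‖x - y‖ ^ 2 ≤ (‖x‖ - ‖y‖) ^ 2 + ‖x‖ * ‖y‖ * φ ^ 2`. For `x = ξ` and `y = ξ - b` this reads
`‖b‖ ^ 2 ≤ o(‖b‖ ^ 2) + (1 + o(1)) ρ ^ 2 φ ^ 2`, so every factor `c < 1` is eventually admissible.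
-/

open Filter Topology InnerProductGeometry

section Real

lemma eventually_mul_rpow_add_le_mul_rpow {s t : ℝ} (hst : s < t) (ht : 0 < t) (A B : ℝ) {ε : ℝ}
    (hε : 0 < ε) : ∀ᶠ x : ℝ in atTop, A * x ^ s + B ≤ ε * x ^ t := by
  have hlim : Tendsto (fun x : ℝ => A * x ^ (-(t - s)) + B * x ^ (-t)) atTop (𝓝 0) := by
    simpa only [mul_zero, add_zero] using
      ((tendsto_rpow_neg_atTop (sub_pos.2 hst)).const_mul A).add
        ((tendsto_rpow_neg_atTop ht).const_mul B)
  filter_upwards [hlim.eventually_le_const hε, eventually_gt_atTop 0] with x hx hx₀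
  calc A * x ^ s + B = (A * x ^ (-(t - s)) + B * x ^ (-t)) * x ^ t := by
        rw [add_mul, mul_assoc, mul_assoc, ← Real.rpow_add hx₀, ← Real.rpow_add hx₀,
          neg_add_cancel, Real.rpow_zero, mul_one, neg_sub, sub_add_cancel]
    _ ≤ ε * x ^ t := by gcongr

lemma mul_le_of_abs_sq_sub_sq_le {p ρ k : ℝ} (hp : 0 ≤ p)
    (h : |p ^ 2 - ρ ^ 2| ≤ (1 - k ^ 2) * ρ ^ 2) : k * ρ ≤ p :=
  le_of_sq_le_sq (by linarith [(abs_le.1 h).1]) hp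

lemma abs_sub_le_of_abs_sq_sub_sq_le {p q ρ t : ℝ} (hρ : 0 < ρ) (hsum : ρ ≤ p + q)
    (h : |p ^ 2 - q ^ 2| ≤ t * ρ) : |p - q| ≤ t := by
  refine le_of_mul_le_mul_right ?_ hρ
  calc |p - q| * ρ ≤ |p - q| * (p + q) := by gcongr
    _ = |p ^ 2 - q ^ 2| := by
        rw [sq_sub_sq, abs_mul, abs_of_nonneg (hρ.le.trans hsum), mul_comm]
    _ ≤ t * ρ := h

end Real

section InnerProductSpace

variable {V : Type*} [NormedAddCommGroup V] [InnerProductSpace ℝ V]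

lemma norm_sub_sq_le_sq_norm_sub_norm_add_mul_angle_sq (x y : V) :
    ‖x - y‖ ^ 2 ≤ (‖x‖ - ‖y‖) ^ 2 + ‖x‖ * ‖y‖ * angle x y ^ 2 := by
  have hcos : ‖x‖ * ‖y‖ * (1 - angle x y ^ 2 / 2) ≤ ‖x‖ * ‖y‖ * Real.cos (angle x y) := by
    gcongr
    exact Real.one_sub_sq_div_two_le_cos
  rw [norm_sub_sq_real, ← cos_angle_mul_norm_mul_norm x y]
  linarith

lemma mul_norm_sub_le_mul_angle {x y : V} {ρ k : ℝ} (hρ : 0 < ρ) (hk : 1 / 2 ≤ k)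
    (hx : |‖x‖ ^ 2 - ρ ^ 2| ≤ (1 - k ^ 2) * ρ ^ 2)
    (hy : |‖y‖ ^ 2 - ρ ^ 2| ≤ (1 - k ^ 2) * ρ ^ 2)
    (hxy : |‖x‖ ^ 2 - ‖y‖ ^ 2| ≤ (1 - k ^ 2) * ‖x - y‖ * ρ) :
    k * ‖x - y‖ ≤ ρ * angle x y := by
  have hk_sq : 0 ≤ 1 - k ^ 2 := nonneg_of_mul_nonneg_left ((abs_nonneg _).trans hx) (by positivity)
  have hsum : ρ ≤ ‖x‖ + ‖y‖ := by
    linarith [mul_le_of_abs_sq_sub_sq_le (norm_nonneg x) hx,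
      mul_le_of_abs_sq_sub_sq_le (norm_nonneg y) hy, mul_le_mul_of_nonneg_right hk hρ.le]
  have hdiff : (‖x‖ - ‖y‖) ^ 2 ≤ ((1 - k ^ 2) * ‖x - y‖) ^ 2 :=
    sq_le_sq.2 ((abs_sub_le_of_abs_sq_sub_sq_le hρ hsum hxy).trans (le_abs_self _))
  have hprod : ‖x‖ * ‖y‖ ≤ (2 - k ^ 2) * ρ ^ 2 := by
    linarith [two_mul_le_add_sq ‖x‖ ‖y‖, (abs_le.1 hx).2, (abs_le.1 hy).2]
  refine le_of_sq_le_sq (le_of_mul_le_mul_left ?_ (by linarith : 0 < 2 - k ^ 2))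
    (mul_nonneg hρ.le (angle_nonneg x y))
  calc (2 - k ^ 2) * (k * ‖x - y‖) ^ 2
      = ‖x - y‖ ^ 2 - ((1 - k ^ 2) * ‖x - y‖) ^ 2 := by ring
    _ ≤ ‖x - y‖ ^ 2 - (‖x‖ - ‖y‖) ^ 2 := by gcongr
    _ ≤ ‖x‖ * ‖y‖ * angle x y ^ 2 := by
        linarith [norm_sub_sq_le_sq_norm_sub_norm_add_mul_angle_sq x y]
    _ ≤ (2 - k ^ 2) * ρ ^ 2 * angle x y ^ 2 := by gcongr
    _ = (2 - k ^ 2) * (ρ * angle x y) ^ 2 := by ring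

lemma ne_zero_and_ne_zero_and_le_angle_of_mem_shells {x y : V} {u v ρ δ k M N : ℝ} (hρ : 0 < ρ)
    (hk : 1 / 2 ≤ k) (hM : M + δ ≤ (1 - k ^ 2) * ρ ^ 2)
    (hN : N + 2 * δ ≤ (1 - k ^ 2) * ‖x - y‖ * ρ)
    (hu : |u| ≤ M) (hv : |v| ≤ M) (huv : |u - v| ≤ N)
    (hx_lower : ρ ^ 2 - δ ≤ ‖x‖ ^ 2 + u) (hx_upper : ‖x‖ ^ 2 + u ≤ ρ ^ 2 + δ)
    (hy_lower : ρ ^ 2 - δ ≤ ‖y‖ ^ 2 + v) (hy_upper : ‖y‖ ^ 2 + v ≤ ρ ^ 2 + δ) :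
    x ≠ 0 ∧ y ≠ 0 ∧ k * ‖x - y‖ / ρ ≤ angle x y := by
  rw [abs_le] at hu hv huv
  have hx : |‖x‖ ^ 2 - ρ ^ 2| ≤ (1 - k ^ 2) * ρ ^ 2 := by
    rw [abs_le]; constructor <;> linarith
  have hy : |‖y‖ ^ 2 - ρ ^ 2| ≤ (1 - k ^ 2) * ρ ^ 2 := by
    rw [abs_le]; constructor <;> linarith
  have hxy : |‖x‖ ^ 2 - ‖y‖ ^ 2| ≤ (1 - k ^ 2) * ‖x - y‖ * ρ := by
    rw [abs_le]; constructor <;> linarith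
  have hkρ : 0 < k * ρ := mul_pos (by linarith) hρ
  refine ⟨norm_pos_iff.1 (hkρ.trans_le (mul_le_of_abs_sq_sub_sq_le (norm_nonneg x) hx)),
    norm_pos_iff.1 (hkρ.trans_le (mul_le_of_abs_sq_sub_sq_le (norm_nonneg y) hy)), ?_⟩
  exact (div_le_iff₀' hρ).2 (mul_norm_sub_le_mul_angle hρ hk hx hy hxy)

variable (V) in
theorem angle_lower_bound_on_intersection_general {γ σ : ℝ} (hγ : γ < 2) (hσ : σ < 1) (A : ℝ)
    {c c₂ : ℝ} (hc : c < 1) (hc₂ : 0 < c₂) (δ₀ : ℝ) :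
    ∃ ρ₀ : ℝ, 1 ≤ ρ₀ ∧ ∀ ρ : ℝ, ρ₀ ≤ ρ → ∀ δ : ℝ, δ ≤ δ₀ → ∀ b : V, c₂ ≤ ‖b‖ →
      ∀ (G₁ G₂ : V → ℝ) (ξ : V),
        |G₁ ξ| ≤ A * ρ ^ γ → |G₂ (ξ - b)| ≤ A * ρ ^ γ →
        |G₁ ξ - G₂ (ξ - b)| ≤ A * ‖b‖ * ρ ^ σ →
        ρ ^ 2 - δ ≤ ‖ξ‖ ^ 2 + G₁ ξ → ‖ξ‖ ^ 2 + G₁ ξ ≤ ρ ^ 2 + δ →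
        ρ ^ 2 - δ ≤ ‖ξ - b‖ ^ 2 + G₂ (ξ - b) → ‖ξ - b‖ ^ 2 + G₂ (ξ - b) ≤ ρ ^ 2 + δ →
        ξ ≠ 0 ∧ ξ ≠ b ∧ c * ‖b‖ / ρ ≤ angle ξ (ξ - b) := by
  obtain ⟨k, hk, hck, hk₁⟩ : ∃ k : ℝ, 1 / 2 ≤ k ∧ c ≤ k ∧ k < 1 :=
    ⟨max (1 / 2) c, le_max_left _ _, le_max_right _ _, max_lt one_half_lt_one hc⟩
  have hk_sq : 0 < 1 - k ^ 2 := sub_pos.2 (pow_lt_one₀ (by linarith) hk₁ two_ne_zero)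
  obtain ⟨ρ₁, hρ₁⟩ := eventually_atTop.1
    ((eventually_mul_rpow_add_le_mul_rpow hγ two_pos A δ₀ hk_sq).and
      (eventually_mul_rpow_add_le_mul_rpow hσ one_pos A (2 * δ₀ / c₂) hk_sq))
  refine ⟨max ρ₁ 1, le_max_right _ _, fun ρ hρ δ hδ b hb G₁ G₂ ξ hG₁ hG₂ hG h₁ h₁' h₂ h₂' => ?_⟩
  obtain ⟨hργ, hρσ⟩ := hρ₁ ρ ((le_max_left _ _).trans hρ)
  rw [Real.rpow_two] at hργ
  rw [Real.rpow_one] at hρσ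
  have hρ_pos : 0 < ρ := zero_lt_one.trans_le ((le_max_right _ _).trans hρ)
  have hδb : 2 * δ ≤ 2 * δ₀ / c₂ * ‖b‖ := by
    have hδ₀ : 0 ≤ δ₀ := by linarith
    calc 2 * δ ≤ 2 * δ₀ / c₂ * c₂ := by rw [div_mul_cancel₀ _ hc₂.ne']; gcongr
      _ ≤ 2 * δ₀ / c₂ * ‖b‖ := by gcongr
  have hN : A * ‖b‖ * ρ ^ σ + 2 * δ ≤ (1 - k ^ 2) * ‖ξ - (ξ - b)‖ * ρ := by
    rw [sub_sub_cancel]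
    linarith [mul_le_mul_of_nonneg_right hρσ (norm_nonneg b)]
  obtain ⟨hξ, hξb, hangle⟩ := ne_zero_and_ne_zero_and_le_angle_of_mem_shells hρ_pos hk
    (by linarith) hN hG₁ hG₂ hG h₁ h₁' h₂ h₂'
  rw [sub_sub_cancel] at hangle
  refine ⟨hξ, sub_ne_zero.1 hξb, le_trans ?_ hangle⟩
  gcongr

end InnerProductSpace

/-- Lemma 9.1: under the stated conditions on G₁, G₂, every point ξ of
𝒳 = 𝒜(g₁;ρ,δ) ∩ (𝒜(g₂;ρ,δ) + b) is nonzero, different from b, and the angle between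
ξ and ξ − b is at least c|b|/ρ. -/
theorem angle_lower_bound_on_intersection
    (d : ℕ) (hd : 2 ≤ d) (γ σ A K : ℝ)
    (hγ : γ < 2) (hσ : σ < 1) (hA : 0 < A) (hK : 1 ≤ K) :
    ∃ c c₂ ρ₀ : ℝ, 0 < c ∧ 1 ≤ c₂ ∧ 1 ≤ ρ₀ ∧
      ∀ ρ : ℝ, ρ₀ ≤ ρ →
      ∀ δ : ℝ, 0 < δ → δ ≤ 1 →
      ∀ b : EuclideanSpace ℝ (Fin d), c₂ ≤ ‖b‖ → ‖b‖ ≤ K * ρ →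
      ∀ G₁ G₂ : EuclideanSpace ℝ (Fin d) → ℝ, Continuous G₁ → Continuous G₂ →
        (∀ ξ, |G₁ ξ| ≤ A * ρ ^ γ) → (∀ ξ, |G₂ ξ| ≤ A * ρ ^ γ) →
        (∀ ξ, |G₁ ξ - G₂ (ξ - b)| ≤ A * ‖b‖ * ρ ^ σ) →
      ∀ ξ : EuclideanSpace ℝ (Fin d),
        ρ ^ 2 - δ ≤ ‖ξ‖ ^ 2 + G₁ ξ → ‖ξ‖ ^ 2 + G₁ ξ ≤ ρ ^ 2 + δ →
        ρ ^ 2 - δ ≤ ‖ξ - b‖ ^ 2 + G₂ (ξ - b) → ‖ξ - b‖ ^ 2 + G₂ (ξ - b) ≤ ρ ^ 2 + δ →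
        ξ ≠ 0 ∧ ξ ≠ b ∧ c * ‖b‖ / ρ ≤ InnerProductGeometry.angle ξ (ξ - b) := by
  obtain ⟨ρ₀, hρ₀, h⟩ := angle_lower_bound_on_intersection_general
    (EuclideanSpace ℝ (Fin d)) hγ hσ A one_half_lt_one one_pos 1
  exact ⟨1 / 2, 1, ρ₀, one_half_pos, le_rfl, hρ₀, fun ρ hρ δ _ hδ b hb _ G₁ G₂ _ _ hG₁ hG₂ hG ξ =>
    h ρ hρ δ hδ b hb G₁ G₂ ξ (hG₁ ξ) (hG₂ (ξ - b)) (hG ξ)⟩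
end
end
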